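/- arXiv:math/0505052 — 4 statements merged into one kernel-verified Lean document; each statement's English description precedes it below -/
import Mathlib

section
/- Let p be an odd prime. A polynomial f in (ZMod p)[ξ, η] satisfies g·f = f for every matrix g in SL₂(ZMod p) if and only if f lies in the (ZMod p)-subalgebra generated by q and r. In other words, the ring of SL₂(ZMod p)-invariants of (ZMod p)[ξ, η] is exactly Algebra.adjoin (ZMod p) {q, r}. -/
open MvPolynomial

/-!
Let `K` be a finite field with `q` elements, let `r = ξη(ξ^(q-1) - η^(q-1))` be, up to a scalar,
the product of all linear forms over `K` (up to proportionality), and let `f` be an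
`SL₂(K)`-invariant. The restriction of `f` to the line `η = 0` is a polynomial in `ξ^q`, because the
invariants of the transvections `ξ ↦ ξ + cη` are generated by `η` and `ξ^q - ξη^(q-1)`, and only
exponents divisible by `q - 1` occur in it, because `f` is invariant under the diagonal torus.
Dickson's second invariant restricts to `ξ^(q(q-1))`, so subtracting a polynomial in it makes `f`
vanish on the line `η = 0`, hence by invariance on every line of `K²` through the origin. The
difference is then divisible by `r`, and the quotient is an invariant of smaller degree.
-/

namespace Dickson

section CommSemiring

variable {R σ : Type*} [CommSemiring R]

theorem totalDegree_polynomial_aeval_le (u : MvPolynomial σ R) (P : Polynomial R) :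
    (Polynomial.aeval u P).totalDegree ≤ P.natDegree * u.totalDegree := by
  rw [Polynomial.aeval_eq_sum_range]
  refine totalDegree_finsetSum_le fun i hi ↦ ?_
  calc (P.coeff i • u ^ i).totalDegree
      ≤ i * u.totalDegree := (totalDegree_smul_le _ _).trans (totalDegree_pow _ _)
    _ ≤ P.natDegree * u.totalDegree :=
      Nat.mul_le_mul_right _ (Nat.lt_succ_iff.1 (Finset.mem_range.1 hi))

theorem mem_range_expand_iff {m : ℕ} (hm : m ≠ 0) {P : Polynomial R} :
    P ∈ (Polynomial.expand R m).range ↔ ∀ n, P.coeff n ≠ 0 → m ∣ n := by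
  constructor
  · rintro ⟨P, rfl⟩ n hn
    by_contra h
    exact hn (by simp [Polynomial.coeff_expand (Nat.pos_of_ne_zero hm), h])
  · refine fun h ↦ ⟨Polynomial.contract m P, Polynomial.ext fun n ↦ ?_⟩
    rw [AlgHom.toRingHom_eq_coe, RingHom.coe_coe, Polynomial.coeff_expand (Nat.pos_of_ne_zero hm),
      Polynomial.coeff_contract hm]
    split_ifs with hn
    · rw [Nat.div_mul_cancel hn]
    · exact (not_imp_comm.1 (h n) hn).symm

/-- The restriction of a polynomial function to the `i`-th coordinate axis, as a univariate
polynomial in the `i`-th coordinate. -/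
noncomputable def axisRestriction [DecidableEq σ] (i : σ) : MvPolynomial σ R →ₐ[R] Polynomial R :=
  aeval (Pi.single i Polynomial.X)

@[simp]
theorem axisRestriction_X_self [DecidableEq σ] (i : σ) :
    axisRestriction i (X i : MvPolynomial σ R) = Polynomial.X := by
  simp [axisRestriction]

@[simp]
theorem axisRestriction_X_of_ne [DecidableEq σ] {i j : σ} (h : j ≠ i) :
    axisRestriction i (X j : MvPolynomial σ R) = 0 := by
  simp [axisRestriction, h]

theorem natDegree_axisRestriction_le [DecidableEq σ] (i : σ) (f : MvPolynomial σ R) :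
    (axisRestriction i f).natDegree ≤ f.totalDegree := by
  refine (aeval_natDegree_le f le_rfl _ fun j ↦ ?_).trans_eq (mul_one _)
  obtain rfl | h := eq_or_ne j i
  · simpa using Polynomial.natDegree_X_le
  · simp [h]

theorem totalDegree_aeval_X_axisRestriction_le [DecidableEq σ] (i : σ) (f : MvPolynomial σ R) :
    (Polynomial.aeval (X i : MvPolynomial σ R) (axisRestriction i f)).totalDegree ≤
      f.totalDegree := by
  calc (Polynomial.aeval (X i : MvPolynomial σ R) (axisRestriction i f)).totalDegree
      ≤ (axisRestriction i f).natDegree * (X i : MvPolynomial σ R).totalDegree :=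
        totalDegree_polynomial_aeval_le _ _
    _ ≤ (axisRestriction i f).natDegree * 1 :=
        Nat.mul_le_mul_left _ (isHomogeneous_X R i).totalDegree_le
    _ ≤ f.totalDegree := by
        rw [mul_one]
        exact natDegree_axisRestriction_le i f

variable [Fintype σ]

/-- The substitution action of a matrix on polynomials, `X i ↦ ∑ j, M i j * X j`. -/
noncomputable def linearSubst (M : Matrix σ σ R) : MvPolynomial σ R →ₐ[R] MvPolynomial σ R :=
  aeval M.toMvPolynomial

theorem linearSubst_fin_two (M : Matrix (Fin 2) (Fin 2) R) :
    linearSubst M = aeval fun i ↦ C (M i 0) * X 0 + C (M i 1) * X 1 := by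
  ext1 i
  simp [linearSubst, Matrix.toMvPolynomial, C_mul_X_eq_monomial]

@[simp]
theorem linearSubst_fin_two_X (M : Matrix (Fin 2) (Fin 2) R) (i : Fin 2) :
    linearSubst M (X i) = C (M i 0) * X 0 + C (M i 1) * X 1 := by
  simp [linearSubst_fin_two]

/-- The subalgebra of polynomials fixed by all members of a family of matrices acting by
substitution. -/
noncomputable def invariants {ι : Type*} (M : ι → Matrix σ σ R) :
    Subalgebra R (MvPolynomial σ R) :=
  ⨅ i, AlgHom.equalizer (linearSubst (M i)) (AlgHom.id R _)

theorem mem_invariants {ι : Type*} {M : ι → Matrix σ σ R} {f : MvPolynomial σ R} :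
    f ∈ invariants M ↔ ∀ i, linearSubst (M i) f = f := by
  simp [invariants, Algebra.mem_iInf, AlgHom.mem_equalizer]

theorem axisRestriction_zero_linearSubst {M : Matrix (Fin 2) (Fin 2) R} (hM : M 1 0 = 0)
    (f : MvPolynomial (Fin 2) R) :
    axisRestriction 0 (linearSubst M f) =
      (axisRestriction 0 f).comp (Polynomial.C (M 0 0) * Polynomial.X) := by
  rw [Polynomial.comp_eq_aeval, ← AlgHom.comp_apply, ← AlgHom.comp_apply]
  congr 1
  ext1 i
  fin_cases i <;> simp [hM, ← algebraMap_eq, Polynomial.algebraMap_eq]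

end CommSemiring

section CommRing

variable {R σ : Type*} [CommRing R]

theorem dvd_aeval_sub_aeval {A : Type*} [CommRing A] [Algebra R A] {d : A} {v w : σ → A}
    (h : ∀ i, d ∣ v i - w i) (f : MvPolynomial σ R) : d ∣ aeval v f - aeval w f := by
  let π := Ideal.Quotient.mkₐ R (Ideal.span {d})
  have hπ : π ∘ v = π ∘ w :=
    funext fun i ↦ Ideal.Quotient.eq.2 (Ideal.mem_span_singleton.2 (h i))
  have hf : π (aeval v f) = π (aeval w f) := by
    rw [comp_aeval_apply, comp_aeval_apply]
    exact congrArg (fun u ↦ aeval u f) hπ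
  exact Ideal.mem_span_singleton.1 (Ideal.Quotient.eq.1 hf)

theorem X_dvd_sub_aeval_axisRestriction {i j : Fin 2} (hij : i ≠ j)
    (f : MvPolynomial (Fin 2) R) :
    X j ∣ f - Polynomial.aeval (X i) (axisRestriction i f) := by
  have h := dvd_aeval_sub_aeval (R := R) (d := (X j : MvPolynomial (Fin 2) R)) (v := X)
    (w := fun k ↦ Polynomial.aeval (X i) ((Pi.single i Polynomial.X : Fin 2 → Polynomial R) k))
    (fun k ↦ ?_) f
  · rwa [aeval_X_left_apply, ← comp_aeval_apply] at h
  · obtain rfl | hk := eq_or_ne k i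
    · simp
    · obtain rfl : k = j := by omega
      simp [hk]

theorem X_dvd_of_axisRestriction_eq_zero {i j : Fin 2} (hij : i ≠ j)
    {f : MvPolynomial (Fin 2) R} (hf : axisRestriction i f = 0) : X j ∣ f := by
  simpa [hf] using X_dvd_sub_aeval_axisRestriction hij f

theorem isRelPrime_X_X [IsDomain R] {i j : σ} (hij : i ≠ j) :
    IsRelPrime (X i : MvPolynomial σ R) (X j) :=
  X_prime.irreducible.isRelPrime_iff_not_dvd.2 (by simpa [X_dvd_X] using hij)

theorem totalDegree_pos_of_X_dvd [IsDomain R] {d : MvPolynomial σ R} (hd : d ≠ 0) {i : σ}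
    (h : X i ∣ d) : 0 < d.totalDegree := by
  simpa [Nat.one_le_iff_ne_zero, pos_iff_ne_zero] using totalDegree_le_of_dvd_of_isDomain h hd

theorem mem_invariants_of_mul_mem [Fintype σ] [IsDomain R] {ι : Type*} {M : ι → Matrix σ σ R}
    {d k : MvPolynomial σ R} (hd₀ : d ≠ 0) (hd : d ∈ invariants M) (h : d * k ∈ invariants M) :
    k ∈ invariants M := by
  rw [mem_invariants] at *
  refine fun i ↦ mul_left_cancel₀ hd₀ ?_
  rw [← h i, map_mul, hd i]

/-- Descent on the degree: the quotient `(f - a) / d` is again an invariant. -/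
theorem invariants_le_of_forall_dvd_sub [Fintype σ] [IsDomain R] {ι : Type*} {M : ι → Matrix σ σ R}
    {A : Subalgebra R (MvPolynomial σ R)} (hA : A ≤ invariants M) {d : MvPolynomial σ R}
    (hdA : d ∈ A) (hd : 0 < d.totalDegree)
    (h : ∀ f ∈ invariants M, ∃ a ∈ A, a.totalDegree ≤ f.totalDegree ∧ d ∣ f - a) :
    invariants M ≤ A := by
  intro f hf
  induction hn : f.totalDegree using Nat.strong_induction_on generalizing f with
  | _ n ih =>
    obtain ⟨a, ha, hdeg, k, hk⟩ := h f hf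
    have hd₀ : d ≠ 0 := by rintro rfl; simp at hd
    have hkM : k ∈ invariants M :=
      mem_invariants_of_mul_mem hd₀ (hA hdA) (hk ▸ sub_mem hf (hA ha))
    have hkA : k ∈ A := by
      obtain rfl | hk₀ := eq_or_ne k 0
      · exact zero_mem A
      have hlt : k.totalDegree < f.totalDegree := by
        have := (totalDegree_sub f a).trans (max_le le_rfl hdeg)
        rw [hk, totalDegree_mul_of_isDomain hd₀ hk₀] at this
        omega
      exact ih _ (hn ▸ hlt) hkM rfl
    rw [← sub_add_cancel f a, hk]
    exact add_mem (mul_mem hdA hkA) ha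

/-- The `SL₂(R)`-invariants of `R[X 0, X 1]`. -/
noncomputable abbrev specialLinearInvariants (R : Type*) [CommRing R] :
    Subalgebra R (MvPolynomial (Fin 2) R) :=
  invariants fun g : Matrix.SpecialLinearGroup (Fin 2) R ↦ (g : Matrix (Fin 2) (Fin 2) R)

/-- The polynomials in `R[X 0, X 1]` invariant under all `X 0 ↦ X 0 + c * X 1`. -/
noncomputable abbrev transvectionInvariants (R : Type*) [CommRing R] :
    Subalgebra R (MvPolynomial (Fin 2) R) :=
  invariants fun c : R ↦ Matrix.transvection (0 : Fin 2) 1 c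

variable (R) in
theorem X_one_mem_transvectionInvariants : X 1 ∈ transvectionInvariants R := by
  simp [mem_invariants, Matrix.transvection, Matrix.single]

theorem specialLinearInvariants_le_transvectionInvariants [Nontrivial R] :
    specialLinearInvariants R ≤ transvectionInvariants R := fun _ hf ↦
  mem_invariants.2 fun c ↦
    mem_invariants.1 hf ⟨_, Matrix.det_transvection_of_ne 0 1 zero_ne_one c⟩

end CommRing

theorem isRelPrime_X_sub_C_mul_X {K : Type*} [Field K] {a b : K} (hab : a ≠ b) :
    IsRelPrime (X 0 - C a * X 1 : MvPolynomial (Fin 2) K) (X 0 - C b * X 1) := by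
  intro d ha hb
  have hunit : IsUnit (C (b - a) : MvPolynomial (Fin 2) K) :=
    (sub_ne_zero.2 hab.symm).isUnit.map C
  have h₁ : d ∣ X 1 := by
    rw [← hunit.dvd_mul_left]
    convert dvd_sub ha hb using 1
    rw [C_sub]
    ring
  have h₀ : d ∣ X 0 := (dvd_sub_left (h₁.mul_left _)).1 ha
  exact isRelPrime_X_X zero_ne_one h₀ h₁

section FiniteField

open Fintype (card)

theorem card_sub_one_ne_zero (α : Type*) [Fintype α] [Nontrivial α] : card α - 1 ≠ 0 :=
  (Nat.sub_pos_of_lt Fintype.one_lt_card).ne'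

variable (K : Type*) [Field K] [Fintype K]

/-- The product `∏ c : K, (X 0 - c * X 1)`, in expanded form: the norm of `X 0` under the group of
transvections `X 0 ↦ X 0 + c * X 1`. -/
noncomputable def transvectionNorm : MvPolynomial (Fin 2) K :=
  X 0 ^ card K - X 0 * X 1 ^ (card K - 1)

/-- Dickson's invariant of degree `q + 1`: up to a scalar, the product of all linear forms up to
proportionality. -/
noncomputable def dicksonL : MvPolynomial (Fin 2) K :=
  X 0 * X 1 * (X 0 ^ (card K - 1) - X 1 ^ (card K - 1))

/-- Dickson's invariant of degree `q² - q`. -/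
noncomputable def dicksonQ : MvPolynomial (Fin 2) K :=
  X 1 ^ (card K ^ 2 - card K) +
    X 0 ^ (card K - 1) * (X 0 ^ (card K - 1) - X 1 ^ (card K - 1)) ^ (card K - 1)

theorem transvectionNorm_eq_X_mul :
    transvectionNorm K = X 0 * (X 0 ^ (card K - 1) - X 1 ^ (card K - 1)) := by
  rw [transvectionNorm, mul_sub, mul_pow_sub_one Fintype.card_ne_zero]

theorem dicksonL_eq_X_mul_transvectionNorm : dicksonL K = X 1 * transvectionNorm K := by
  rw [dicksonL, transvectionNorm_eq_X_mul]
  ring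

theorem dicksonQ_eq_add_transvectionNorm_pow :
    dicksonQ K = X 1 ^ (card K ^ 2 - card K) + transvectionNorm K ^ (card K - 1) := by
  rw [dicksonQ, transvectionNorm_eq_X_mul, mul_pow]

theorem prod_X_sub_C_eq_X_pow_card_sub_X :
    ∏ c : K, (Polynomial.X - Polynomial.C c) = Polynomial.X ^ card K - Polynomial.X := by
  have hmonic : (Polynomial.X ^ card K - Polynomial.X : Polynomial K).Monic :=
    Polynomial.monic_X_pow_sub (by simpa using Fintype.one_lt_card)
  have hroots := FiniteField.roots_X_pow_card_sub_X K
  have hcard : (Polynomial.X ^ card K - Polynomial.X : Polynomial K).roots.card =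
      (Polynomial.X ^ card K - Polynomial.X : Polynomial K).natDegree := by
    rw [hroots, FiniteField.X_pow_card_sub_X_natDegree_eq K Fintype.one_lt_card]
    rfl
  rw [← Polynomial.prod_multiset_X_sub_C_of_monic_of_roots_card_eq hmonic hcard, hroots,
    Finset.prod]

theorem prod_X_sub_C_mul_X :
    ∏ c : K, (X 0 - C c * X 1 : MvPolynomial (Fin 2) K) = transvectionNorm K := by
  have h := Polynomial.homogenize_finsetProd (s := Finset.univ) (n := fun _ : K ↦ 1)
    (fun c _ ↦ Polynomial.natDegree_X_sub_C_le c)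
  simpa [prod_X_sub_C_eq_X_pow_card_sub_X, transvectionNorm] using h.symm

variable {K} in
theorem transvectionNorm_dvd {f : MvPolynomial (Fin 2) K} (h : ∀ c, X 0 - C c * X 1 ∣ f) :
    transvectionNorm K ∣ f := by
  rw [← prod_X_sub_C_mul_X]
  exact Finset.prod_dvd_of_isRelPrime (fun a _ b _ hab ↦ isRelPrime_X_sub_C_mul_X hab)
    fun c _ ↦ h c

theorem axisRestriction_transvectionNorm :
    axisRestriction 0 (transvectionNorm K) = Polynomial.X ^ card K := by
  simp [transvectionNorm, card_sub_one_ne_zero]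

theorem axisRestriction_dicksonQ :
    axisRestriction 0 (dicksonQ K) = Polynomial.X ^ (card K * (card K - 1)) := by
  have h : card K ^ 2 - card K ≠ 0 := by
    rw [sq, ← Nat.mul_sub_one]
    exact mul_ne_zero Fintype.card_ne_zero (card_sub_one_ne_zero K)
  simp [dicksonQ_eq_add_transvectionNorm_pow, axisRestriction_transvectionNorm, h, pow_mul]

theorem transvectionNorm_ne_zero : transvectionNorm K ≠ 0 := by
  intro h
  have h' := axisRestriction_transvectionNorm K
  rw [h, map_zero] at h'
  exact pow_ne_zero _ Polynomial.X_ne_zero h'.symm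

theorem dicksonL_ne_zero : dicksonL K ≠ 0 := by
  rw [dicksonL_eq_X_mul_transvectionNorm]
  exact mul_ne_zero (X_ne_zero 1) (transvectionNorm_ne_zero K)

theorem isHomogeneous_transvectionNorm : (transvectionNorm K).IsHomogeneous (card K) := by
  have h := (isHomogeneous_X K (0 : Fin 2)).mul
    (isHomogeneous_X_pow (R := K) (1 : Fin 2) (card K - 1))
  rw [Nat.add_sub_cancel' Fintype.card_pos] at h
  exact (isHomogeneous_X_pow 0 _).sub h

theorem isHomogeneous_dicksonQ : (dicksonQ K).IsHomogeneous (card K * (card K - 1)) := by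
  rw [dicksonQ_eq_add_transvectionNorm_pow, sq, ← Nat.mul_sub_one]
  exact (isHomogeneous_X_pow 1 _).add ((isHomogeneous_transvectionNorm K).pow _)

section Invariance

variable {K}

theorem algebraMap_mul_add_pow_card_pow {A : Type*} [CommRing A] [Algebra K A] (a b : K) (x y : A)
    (n : ℕ) :
    (algebraMap K A a * x + algebraMap K A b * y) ^ card K ^ n =
      algebraMap K A a * x ^ card K ^ n + algebraMap K A b * y ^ card K ^ n := by
  induction n with
  | zero => simp
  | succ n ih =>
    rw [pow_succ, pow_mul, ih, ← FiniteField.frobeniusAlgHom_apply K]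
    simp only [map_add, map_mul, AlgHom.commutes, FiniteField.frobeniusAlgHom_apply, ← pow_mul]

/- A `2 × 2` Moore determinant: since Frobenius fixes `K`, a substitution `M` multiplies it by
`det M`. -/
theorem X_pow_mul_X_sub_mem_specialLinearInvariants (n : ℕ) :
    (X 0 ^ card K ^ n * X 1 - X 0 * X 1 ^ card K ^ n : MvPolynomial (Fin 2) K) ∈
      specialLinearInvariants K := by
  refine mem_invariants.2 fun g ↦ ?_
  have hdet : (C (g.1 0 0) * C (g.1 1 1) - C (g.1 0 1) * C (g.1 1 0) :
      MvPolynomial (Fin 2) K) = 1 := by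
    rw [← C_mul, ← C_mul, ← C_sub, ← Matrix.det_fin_two, g.2, C_1]
  simp only [map_sub, map_mul, map_pow, linearSubst_fin_two_X, ← algebraMap_eq,
    algebraMap_mul_add_pow_card_pow] at hdet ⊢
  linear_combination (X 0 ^ card K ^ n * X 1 - X 0 * X 1 ^ card K ^ n) * hdet

variable (K)

theorem dicksonL_eq_sub : dicksonL K = X 0 ^ card K * X 1 - X 0 * X 1 ^ card K := by
  rw [dicksonL, ← mul_pow_sub_one (Fintype.card_ne_zero (α := K)) (X 0),
    ← mul_pow_sub_one (Fintype.card_ne_zero (α := K)) (X 1)]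
  ring

theorem dicksonL_mul_dicksonQ :
    dicksonL K * dicksonQ K = X 0 ^ card K ^ 2 * X 1 - X 0 * X 1 ^ card K ^ 2 := by
  have hnorm : transvectionNorm K ^ card K =
      X 0 ^ card K ^ 2 - X 0 ^ card K * X 1 ^ (card K ^ 2 - card K) := by
    rw [transvectionNorm, ← FiniteField.frobeniusAlgHom_apply K, map_sub, map_mul]
    simp only [FiniteField.frobeniusAlgHom_apply, ← pow_mul, Nat.sub_mul, one_mul, sq]
  have hX : (X 1 : MvPolynomial (Fin 2) K) ^ card K ^ 2 =
      X 1 ^ (card K ^ 2 - card K) * X 1 ^ card K := by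
    rw [pow_sub_mul_pow _ (Nat.le_self_pow two_ne_zero _)]
  calc dicksonL K * dicksonQ K
      = X 1 * transvectionNorm K * X 1 ^ (card K ^ 2 - card K) +
          X 1 * transvectionNorm K ^ card K := by
        rw [dicksonL_eq_X_mul_transvectionNorm, dicksonQ_eq_add_transvectionNorm_pow,
          ← mul_pow_sub_one Fintype.card_ne_zero (transvectionNorm K)]
        ring
    _ = X 0 ^ card K ^ 2 * X 1 - X 0 * X 1 ^ card K ^ 2 := by
        rw [hnorm, hX, transvectionNorm, ← mul_pow_sub_one Fintype.card_ne_zero (X 1)]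
        ring

theorem dicksonL_mem_specialLinearInvariants : dicksonL K ∈ specialLinearInvariants K := by
  simpa [dicksonL_eq_sub] using X_pow_mul_X_sub_mem_specialLinearInvariants (K := K) 1

theorem dicksonQ_mem_specialLinearInvariants : dicksonQ K ∈ specialLinearInvariants K :=
  mem_invariants_of_mul_mem (dicksonL_ne_zero K) (dicksonL_mem_specialLinearInvariants K)
    (dicksonL_mul_dicksonQ K ▸ X_pow_mul_X_sub_mem_specialLinearInvariants 2)

theorem transvectionNorm_mem_transvectionInvariants :
    transvectionNorm K ∈ transvectionInvariants K :=
  mem_invariants_of_mul_mem (X_ne_zero 1) (X_one_mem_transvectionInvariants K)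
    (dicksonL_eq_X_mul_transvectionNorm K ▸
      specialLinearInvariants_le_transvectionInvariants (dicksonL_mem_specialLinearInvariants K))

theorem adjoin_le_transvectionInvariants :
    Algebra.adjoin K {X 1, transvectionNorm K} ≤ transvectionInvariants K :=
  Algebra.adjoin_le <| Set.pair_subset (X_one_mem_transvectionInvariants K)
    (transvectionNorm_mem_transvectionInvariants K)

theorem transvectionNorm_dvd_sub_aeval_axisRestriction {f : MvPolynomial (Fin 2) K}
    (hf : f ∈ transvectionInvariants K) :
    transvectionNorm K ∣ f - Polynomial.aeval (X 1) (axisRestriction 1 f) := by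
  have hmem : Polynomial.aeval (X 1) (axisRestriction 1 f) ∈ transvectionInvariants K :=
    Algebra.adjoin_singleton_le (X_one_mem_transvectionInvariants K)
      (Polynomial.aeval_mem_adjoin_singleton K _)
  refine transvectionNorm_dvd fun c ↦ ?_
  have h := map_dvd (linearSubst (Matrix.transvection (0 : Fin 2) 1 (-c)))
    (X_dvd_sub_aeval_axisRestriction one_ne_zero f)
  rw [mem_invariants.1 (sub_mem hf hmem)] at h
  simpa [Matrix.transvection, Matrix.single, sub_eq_add_neg] using h

theorem exists_mem_adjoin_transvectionNorm_dvd_sub {f : MvPolynomial (Fin 2) K}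
    (hf : f ∈ transvectionInvariants K) :
    ∃ a ∈ Algebra.adjoin K {X 1, transvectionNorm K},
      a.totalDegree ≤ f.totalDegree ∧ transvectionNorm K ∣ f - a := by
  have hX : X 1 ∈ Algebra.adjoin K {X 1, transvectionNorm K} :=
    Algebra.subset_adjoin (Set.mem_insert _ _)
  exact ⟨Polynomial.aeval (X 1) (axisRestriction 1 f),
    Algebra.adjoin_singleton_le hX (Polynomial.aeval_mem_adjoin_singleton K _),
    totalDegree_aeval_X_axisRestriction_le 1 f,
    transvectionNorm_dvd_sub_aeval_axisRestriction K hf⟩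

theorem transvectionInvariants_eq_adjoin :
    transvectionInvariants K = Algebra.adjoin K {X 1, transvectionNorm K} := by
  have hle := adjoin_le_transvectionInvariants K
  have hnorm : transvectionNorm K ∈ Algebra.adjoin K {X 1, transvectionNorm K} :=
    Algebra.subset_adjoin (Set.mem_insert_of_mem _ (Set.mem_singleton _))
  have hpos : 0 < (transvectionNorm K).totalDegree :=
    totalDegree_pos_of_X_dvd (transvectionNorm_ne_zero K)
      (Dvd.intro _ (transvectionNorm_eq_X_mul K).symm)
  exact le_antisymm (invariants_le_of_forall_dvd_sub hle hnorm hpos fun f hf ↦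
    exists_mem_adjoin_transvectionNorm_dvd_sub K hf) hle

end Invariance

section RestrictionToAxis

variable {K}

theorem axisRestriction_mem_range_expand_card {f : MvPolynomial (Fin 2) K}
    (hf : f ∈ transvectionInvariants K) :
    axisRestriction 0 f ∈ (Polynomial.expand K (card K)).range := by
  rw [transvectionInvariants_eq_adjoin] at hf
  have hle : Algebra.adjoin K {X 1, transvectionNorm K} ≤
      (Polynomial.expand K (card K)).range.comap (axisRestriction 0) := Algebra.adjoin_le <|
    Set.pair_subset ⟨0, by simp⟩ ⟨Polynomial.X, by simp [axisRestriction_transvectionNorm]⟩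
  exact hle hf

theorem card_sub_one_dvd_of_comp_C_mul_X_eq {P : Polynomial K}
    (hP : ∀ a : Kˣ, P.comp (Polynomial.C (a : K) * Polynomial.X) = P) {n : ℕ}
    (hn : P.coeff n ≠ 0) : card K - 1 ∣ n := by
  refine (FiniteField.forall_pow_eq_one_iff K n).1 fun a ↦ Units.ext ?_
  have h := congrArg (fun Q ↦ Q.coeff n) (hP a)
  rw [Polynomial.comp_C_mul_X_coeff] at h
  simpa [hn] using h

theorem axisRestriction_mem_range_expand {f : MvPolynomial (Fin 2) K}
    (hf : f ∈ specialLinearInvariants K) :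
    axisRestriction 0 f ∈ (Polynomial.expand K (card K * (card K - 1))).range := by
  rw [mem_range_expand_iff (mul_ne_zero Fintype.card_ne_zero (card_sub_one_ne_zero K))]
  intro n hn
  have hcard : card K ∣ n :=
    (mem_range_expand_iff Fintype.card_ne_zero).1 (axisRestriction_mem_range_expand_card
      (specialLinearInvariants_le_transvectionInvariants hf)) n hn
  have hcard_sub_one : card K - 1 ∣ n := by
    refine card_sub_one_dvd_of_comp_C_mul_X_eq (fun a ↦ ?_) hn
    have h := mem_invariants.1 hf ⟨!![(a : K), 0; 0, ↑a⁻¹], by simp [Matrix.det_fin_two]⟩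
    conv_rhs => rw [← h, axisRestriction_zero_linearSubst (by simp)]
    simp
  have hcop : (card K).Coprime (card K - 1) :=
    (Nat.coprime_self_sub_right Fintype.card_pos).2 (Nat.coprime_one_right _)
  exact hcop.mul_dvd_of_dvd_of_dvd hcard hcard_sub_one

theorem dicksonL_dvd_of_axisRestriction_eq_zero {f : MvPolynomial (Fin 2) K}
    (hf : f ∈ specialLinearInvariants K) (h₀ : axisRestriction 0 f = 0) : dicksonL K ∣ f := by
  have hX : X 1 ∣ f := X_dvd_of_axisRestriction_eq_zero zero_ne_one h₀
  have hnorm : transvectionNorm K ∣ f := transvectionNorm_dvd fun c ↦ by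
    let g : Matrix.SpecialLinearGroup (Fin 2) K :=
      ⟨!![0, -1; 1, -c], by simp [Matrix.det_fin_two]⟩
    have h := map_dvd (linearSubst (g : Matrix (Fin 2) (Fin 2) K)) hX
    rw [mem_invariants.1 hf] at h
    simpa [g, sub_eq_add_neg] using h
  have hrel : IsRelPrime (X 1) (transvectionNorm K) := by
    refine X_prime.irreducible.isRelPrime_iff_not_dvd.2 fun h ↦ ?_
    simpa [axisRestriction_transvectionNorm] using map_dvd (axisRestriction 0) h
  rw [dicksonL_eq_X_mul_transvectionNorm]
  exact hrel.mul_dvd hX hnorm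

end RestrictionToAxis

theorem exists_mem_adjoin_dicksonQ_axisRestriction_eq {f : MvPolynomial (Fin 2) K}
    (hf : f ∈ specialLinearInvariants K) :
    ∃ a ∈ Algebra.adjoin K {dicksonQ K}, a.totalDegree ≤ f.totalDegree ∧
      axisRestriction 0 a = axisRestriction 0 f := by
  obtain ⟨P, hP⟩ := axisRestriction_mem_range_expand hf
  replace hP : Polynomial.expand K (card K * (card K - 1)) P = axisRestriction 0 f := hP
  refine ⟨Polynomial.aeval (dicksonQ K) P, Polynomial.aeval_mem_adjoin_singleton K _, ?_, ?_⟩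
  · calc (Polynomial.aeval (dicksonQ K) P).totalDegree
        ≤ P.natDegree * (dicksonQ K).totalDegree := totalDegree_polynomial_aeval_le _ _
      _ ≤ P.natDegree * (card K * (card K - 1)) :=
        Nat.mul_le_mul_left _ (isHomogeneous_dicksonQ K).totalDegree_le
      _ = (axisRestriction 0 f).natDegree := by rw [← hP, Polynomial.natDegree_expand]
      _ ≤ f.totalDegree := natDegree_axisRestriction_le 0 f
  · rw [← hP, ← Polynomial.aeval_algHom_apply, axisRestriction_dicksonQ,
      Polynomial.expand_eq_comp_X_pow, Polynomial.comp_eq_aeval]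

theorem adjoin_le_specialLinearInvariants :
    Algebra.adjoin K {dicksonQ K, dicksonL K} ≤ specialLinearInvariants K :=
  Algebra.adjoin_le <| Set.pair_subset (dicksonQ_mem_specialLinearInvariants K)
    (dicksonL_mem_specialLinearInvariants K)

theorem exists_mem_adjoin_dicksonL_dvd_sub {f : MvPolynomial (Fin 2) K}
    (hf : f ∈ specialLinearInvariants K) :
    ∃ a ∈ Algebra.adjoin K {dicksonQ K, dicksonL K},
      a.totalDegree ≤ f.totalDegree ∧ dicksonL K ∣ f - a := by
  obtain ⟨a, ha, hdeg, hres⟩ := exists_mem_adjoin_dicksonQ_axisRestriction_eq K hf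
  have haA : a ∈ Algebra.adjoin K {dicksonQ K, dicksonL K} :=
    Algebra.adjoin_mono (Set.singleton_subset_iff.2 (Set.mem_insert _ _)) ha
  have hsub : f - a ∈ specialLinearInvariants K :=
    sub_mem hf (adjoin_le_specialLinearInvariants K haA)
  exact ⟨a, haA, hdeg,
    dicksonL_dvd_of_axisRestriction_eq_zero hsub (by rw [map_sub, hres, sub_self])⟩

theorem specialLinearInvariants_eq_adjoin :
    specialLinearInvariants K = Algebra.adjoin K {dicksonQ K, dicksonL K} := by
  have hle := adjoin_le_specialLinearInvariants K
  have hL : dicksonL K ∈ Algebra.adjoin K {dicksonQ K, dicksonL K} :=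
    Algebra.subset_adjoin (Set.mem_insert_of_mem _ (Set.mem_singleton _))
  have hpos : 0 < (dicksonL K).totalDegree :=
    totalDegree_pos_of_X_dvd (dicksonL_ne_zero K)
      (Dvd.intro _ (dicksonL_eq_X_mul_transvectionNorm K).symm)
  exact le_antisymm (invariants_le_of_forall_dvd_sub hle hL hpos fun f hf ↦
    exists_mem_adjoin_dicksonL_dvd_sub K hf) hle

end FiniteField

end Dickson

open Dickson in
theorem stmt_0_general (K : Type*) [Field K] [Fintype K] (f : MvPolynomial (Fin 2) K) :
    (∀ g : Matrix.SpecialLinearGroup (Fin 2) K,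
        aeval (fun i : Fin 2 =>
          C ((g : Matrix (Fin 2) (Fin 2) K) i 0) * X 0 +
          C ((g : Matrix (Fin 2) (Fin 2) K) i 1) * X 1) f = f) ↔
      f ∈ Algebra.adjoin K {dicksonQ K, dicksonL K} := by
  simp_rw [← linearSubst_fin_two]
  rw [← specialLinearInvariants_eq_adjoin, mem_invariants]

/-- Let `p` be an odd prime.  Writing `ξ = X 0`, `η = X 1` in `(ZMod p)[ξ, η]`, with
`q = η^(p²-p) + ξ^(p-1)·(ξ^(p-1) - η^(p-1))^(p-1)` and `r = ξ·η·(ξ^(p-1) - η^(p-1))`,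
a polynomial `f` is invariant under the substitution action of every `g ∈ SL₂(ZMod p)`
if and only if `f` lies in the `(ZMod p)`-subalgebra generated by `q` and `r`. -/
theorem stmt_0 (p : ℕ) (hp : p.Prime) (hodd : Odd p)
    (q r : MvPolynomial (Fin 2) (ZMod p))
    (hq : q = X 1 ^ (p ^ 2 - p) +
      X 0 ^ (p - 1) * (X 0 ^ (p - 1) - X 1 ^ (p - 1)) ^ (p - 1))
    (hr : r = X 0 * X 1 * (X 0 ^ (p - 1) - X 1 ^ (p - 1)))
    (f : MvPolynomial (Fin 2) (ZMod p)) :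
    (∀ g : Matrix.SpecialLinearGroup (Fin 2) (ZMod p),
        aeval (fun i : Fin 2 =>
          C ((g : Matrix (Fin 2) (Fin 2) (ZMod p)) i 0) * X 0 +
          C ((g : Matrix (Fin 2) (Fin 2) (ZMod p)) i 1) * X 1) f = f) ↔
      f ∈ Algebra.adjoin (ZMod p) {q, r} := by
  have : Fact p.Prime := ⟨hp⟩
  simpa only [hq, hr, Dickson.dicksonQ, Dickson.dicksonL, ZMod.card] using
    stmt_0_general (ZMod p) f
end

section
/- Let p be an odd prime. For every invertible 2×2 matrix g over ZMod p, the substitution action of g fixes q and fixes r^(p−1); moreover, if det g = 1, then it also fixes r. -/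
open MvPolynomial

/-!
Write `s` for the order of the base field `K`. The power maps `x ↦ x ^ s ^ n` are `K`-linear, so
`x ^ s ^ n * y - x * y ^ s ^ n` is an alternating bilinear form in `(x, y)` and a matrix `g` scales
it by `det g`. For `n = 1` this form is `r`, and for `n = 2` it is `r * q`. Thus `r` and `r * q` are
scaled by the same factor, and cancelling `r` shows that `q` is invariant, while `r ^ (s - 1)` is
invariant because `det g` has order dividing `s - 1`.
-/

section CommRing

variable {A : Type*} [CommRing A]

/-- The two-variable Moore determinant, with the sign chosen so that `r` is its value at `m = p`.
The exponent `m` is arbitrary here; the form is bilinear over a finite field `K` when `m` is a power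
of the order of `K`. -/
def mooreForm (m : ℕ) (x y : A) : A :=
  x ^ m * y - x * y ^ m

/-- The degree `s ^ 2 - s` Dickson invariant of `GL₂` over the field with `s` elements (`q` in the
theorem), evaluated at `(x, y)`. It is the quotient of two Moore determinants written without
division. -/
def dicksonInvariant (s : ℕ) (x y : A) : A :=
  y ^ (s ^ 2 - s) + x ^ (s - 1) * (x ^ (s - 1) - y ^ (s - 1)) ^ (s - 1)

theorem mul_mul_pow_sub_pow_eq_mooreForm {m : ℕ} (hm : m ≠ 0) (x y : A) :
    x * y * (x ^ (m - 1) - y ^ (m - 1)) = mooreForm m x y := by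
  rw [mooreForm, ← mul_pow_sub_one hm x, ← mul_pow_sub_one hm y]
  ring

theorem map_mooreForm {B F : Type*} [CommRing B] [FunLike F A B] [RingHomClass F A B] (f : F)
    (m : ℕ) (x y : A) : f (mooreForm m x y) = mooreForm m (f x) (f y) := by
  simp only [mooreForm, map_sub, map_mul, map_pow]

theorem map_dicksonInvariant {B F : Type*} [CommRing B] [FunLike F A B] [RingHomClass F A B]
    (f : F) (s : ℕ) (x y : A) :
    f (dicksonInvariant s x y) = dicksonInvariant s (f x) (f y) := by
  simp only [dicksonInvariant, map_add, map_sub, map_mul, map_pow]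

theorem mooreForm_X_ne_zero [Nontrivial A] {σ : Type*} {i j : σ} (hij : i ≠ j) {m : ℕ}
    (hm : m ≠ 1) : mooreForm m (X i : MvPolynomial σ A) (X j) ≠ 0 := by
  classical
  intro h
  have specialized : (Polynomial.X : Polynomial A) ^ m = Polynomial.X := by
    simpa [mooreForm, hij.symm, sub_eq_zero] using
      congrArg (aeval fun k => if k = i then (Polynomial.X : Polynomial A) else 1) h
  exact hm (by simpa using congrArg Polynomial.natDegree specialized)

end CommRing

section FiniteField

variable {K A : Type*} [Field K] [Fintype K] [CommRing A] [Algebra K A]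

theorem smul_add_smul_pow_card_pow (n : ℕ) (a b : K) (x y : A) :
    (a • x + b • y) ^ Fintype.card K ^ n =
      a • x ^ Fintype.card K ^ n + b • y ^ Fintype.card K ^ n := by
  simpa [AlgHom.coe_pow, FiniteField.coe_frobeniusAlgHom, pow_iterate] using
    map_add (FiniteField.frobeniusAlgHom K A ^ n) (a • x) (b • y)

theorem mooreForm_card_pow_smul_add_smul (n : ℕ) (g : Matrix (Fin 2) (Fin 2) K) (x y : A) :
    mooreForm (Fintype.card K ^ n) (g 0 0 • x + g 0 1 • y) (g 1 0 • x + g 1 1 • y) =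
      g.det • mooreForm (Fintype.card K ^ n) x y := by
  simp only [mooreForm, smul_add_smul_pow_card_pow, Matrix.det_fin_two]
  simp only [Algebra.smul_def, map_sub, map_mul]
  ring

theorem mooreForm_card_smul_add_smul (g : Matrix (Fin 2) (Fin 2) K) (x y : A) :
    mooreForm (Fintype.card K) (g 0 0 • x + g 0 1 • y) (g 1 0 • x + g 1 1 • y) =
      g.det • mooreForm (Fintype.card K) x y := by
  simpa only [pow_one] using mooreForm_card_pow_smul_add_smul 1 g x y

variable (K) in
theorem mooreForm_card_mul_dicksonInvariant (x y : A) :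
    mooreForm (Fintype.card K) x y * dicksonInvariant (Fintype.card K) x y =
      mooreForm (Fintype.card K ^ 2) x y := by
  set s := Fintype.card K
  have hs : s ≠ 0 := Fintype.card_ne_zero
  have pow_sub_pow_card : (x ^ (s - 1) - y ^ (s - 1)) * (x ^ (s - 1) - y ^ (s - 1)) ^ (s - 1) =
      (x ^ (s - 1)) ^ s - (y ^ (s - 1)) ^ s := by
    rw [mul_pow_sub_one hs]
    exact map_sub (FiniteField.frobeniusAlgHom K A) _ _
  have pow_card_sq (z : A) : z ^ s ^ 2 = z * z ^ (s - 1) * (z ^ (s - 1)) ^ s := by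
    rw [mul_pow_sub_one hs, ← mul_pow, mul_pow_sub_one hs, ← pow_mul, sq]
  have pow_card_sq_sub_card : y ^ (s ^ 2 - s) = (y ^ (s - 1)) ^ s := by
    rw [← pow_mul, Nat.sub_one_mul, sq]
  rw [← mul_mul_pow_sub_pow_eq_mooreForm hs, dicksonInvariant, pow_card_sq_sub_card, mooreForm,
    pow_card_sq x, pow_card_sq y]
  linear_combination (x * y * x ^ (s - 1)) * pow_sub_pow_card

theorem dicksonInvariant_card_smul_add_smul [IsDomain A] {g : Matrix (Fin 2) (Fin 2) K}
    (hg : g.det ≠ 0) {x y : A} (hxy : mooreForm (Fintype.card K) x y ≠ 0) :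
    dicksonInvariant (Fintype.card K) (g 0 0 • x + g 0 1 • y) (g 1 0 • x + g 1 1 • y) =
      dicksonInvariant (Fintype.card K) x y := by
  have hscaled : g.det • mooreForm (Fintype.card K) x y ≠ 0 := smul_ne_zero hg hxy
  apply mul_left_cancel₀ hscaled
  conv_lhs => rw [← mooreForm_card_smul_add_smul]
  rw [mooreForm_card_mul_dicksonInvariant K, mooreForm_card_pow_smul_add_smul, smul_mul_assoc,
    mooreForm_card_mul_dicksonInvariant K]

theorem stmt_8_general (q r : MvPolynomial (Fin 2) K)
    (hq : q = X 1 ^ (Fintype.card K ^ 2 - Fintype.card K) +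
      X 0 ^ (Fintype.card K - 1) *
        (X 0 ^ (Fintype.card K - 1) - X 1 ^ (Fintype.card K - 1)) ^ (Fintype.card K - 1))
    (hr : r = X 0 * X 1 * (X 0 ^ (Fintype.card K - 1) - X 1 ^ (Fintype.card K - 1)))
    (g : Matrix (Fin 2) (Fin 2) K) (hg : IsUnit g.det) :
    aeval (fun i : Fin 2 => C (g i 0) * X 0 + C (g i 1) * X 1) q = q ∧
    aeval (fun i : Fin 2 => C (g i 0) * X 0 + C (g i 1) * X 1) (r ^ (Fintype.card K - 1)) =
      r ^ (Fintype.card K - 1) ∧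
    (g.det = 1 → aeval (fun i : Fin 2 => C (g i 0) * X 0 + C (g i 1) * X 1) r = r) := by
  simp only [C_mul']
  set φ := aeval (R := K) fun i : Fin 2 => g i 0 • X 0 + g i 1 • (X 1 : MvPolynomial (Fin 2) K)
  replace hr : r = mooreForm (Fintype.card K) (X 0) (X 1) :=
    hr.trans (mul_mul_pow_sub_pow_eq_mooreForm Fintype.card_ne_zero _ _)
  have map_r : φ r = g.det • r := by
    rw [hr, map_mooreForm, aeval_X, aeval_X, mooreForm_card_smul_add_smul]
  refine ⟨?_, ?_, fun hdet => by rw [map_r, hdet, one_smul]⟩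
  · change q = dicksonInvariant (Fintype.card K) (X 0) (X 1) at hq
    rw [hq, map_dicksonInvariant, aeval_X, aeval_X]
    exact dicksonInvariant_card_smul_add_smul hg.ne_zero
      (mooreForm_X_ne_zero zero_ne_one Fintype.one_lt_card.ne')
  · rw [map_pow, map_r, smul_pow, FiniteField.pow_card_sub_one_eq_one _ hg.ne_zero, one_smul]

end FiniteField

/-- Let `p` be an odd prime.  For every invertible `2×2` matrix `g` over `ZMod p`, the
substitution action of `g` (given by `ξ ↦ g₀₀·ξ + g₀₁·η`, `η ↦ g₁₀·ξ + g₁₁·η`) fixes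
`q` and fixes `r^(p-1)`; moreover if `det g = 1` then it also fixes `r`. -/
theorem stmt_8 (p : ℕ) (hp : p.Prime) (hodd : Odd p)
    (q r : MvPolynomial (Fin 2) (ZMod p))
    (hq : q = X 1 ^ (p ^ 2 - p) +
      X 0 ^ (p - 1) * (X 0 ^ (p - 1) - X 1 ^ (p - 1)) ^ (p - 1))
    (hr : r = X 0 * X 1 * (X 0 ^ (p - 1) - X 1 ^ (p - 1)))
    (g : Matrix (Fin 2) (Fin 2) (ZMod p)) (hg : IsUnit g.det) :
    aeval (fun i : Fin 2 => C (g i 0) * X 0 + C (g i 1) * X 1) q = q ∧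
    aeval (fun i : Fin 2 => C (g i 0) * X 0 + C (g i 1) * X 1) (r ^ (p - 1)) = r ^ (p - 1) ∧
    (g.det = 1 → aeval (fun i : Fin 2 => C (g i 0) * X 0 + C (g i 1) * X 1) r = r) := by
  have : Fact p.Prime := ⟨hp⟩
  simpa only [ZMod.card] using
    stmt_8_general q r (by rwa [ZMod.card]) (by rwa [ZMod.card]) g hg
end

section
/- Let p be an odd prime. Let ψ : ℤ[x₁, …, x_p] → (ZMod p)[X] be the ring homomorphism sending x_i to i·X for i = 1, …, p, and let A be the ℤ-subalgebra of ℤ[x₁, …, x_p] generated by all differences x_i − x_j. Then the image under ψ of the set of S_p-invariant elements of A (those fixed by every permutation of the variables) is the subring of (ZMod p)[X] generated by X^(p²−p). -/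
open MvPolynomial

/-!
Let `K` be a finite field of odd order `q`, let `c` enumerate `K`, and let `f` be a symmetric
polynomial in the differences `x_i - x_j`.

The elementary symmetric polynomials of the elements of `K` are read off `X ^ q - X`: in positive
degree only the one of degree `q - 1` survives. Hence `f (c t)` is a polynomial in `t ^ (q - 1)`.

Consider `F(t, u) = f (c t + c² u)`. The substitution `c ↦ c + b` permutes `K`, so it does not
change `F`; on the other hand `(c + b) t + (c + b)² u = c (t + 2bu) + c² u + const`. As `f` is
invariant under translation, `F(t + 2bu, u) = F(t, u)` for all `b`, so `F` is a polynomial in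
`∏ b, (t - bu)` with coefficients in `K[u]`. At `u = 0` this product is `t ^ q`, so `f (c t)` is a
polynomial in `t ^ q` as well, hence in `t ^ (q² - q)`. The discriminant `∏_{i ≠ j} (x_i - x_j)`
restricts to `-t ^ (q² - q)`.
-/

section Polynomial

open scoped Polynomial

theorem mem_adjoin_X_pow_iff {R S : Type*} [CommSemiring R] [CommSemiring S] [Algebra R S]
    {m : ℕ} {P : S[X]} :
    P ∈ Algebra.adjoin R {(Polynomial.X : S[X]) ^ m} ↔
      (∀ d, P.coeff d ∈ Set.range (algebraMap R S)) ∧ ∀ d, ¬ m ∣ d → P.coeff d = 0 := by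
  constructor
  · intro hP
    rw [Algebra.adjoin_singleton_eq_range_aeval] at hP
    obtain ⟨Q, rfl⟩ := hP
    have coeff_aeval (d : ℕ) : (Polynomial.aeval ((Polynomial.X : S[X]) ^ m) Q).coeff d =
        algebraMap R S
          (∑ k ∈ Finset.range (Q.natDegree + 1), if d = m * k then Q.coeff k else 0) := by
      simp [Polynomial.aeval_eq_sum_range, Polynomial.finsetSum_coeff, ← pow_mul,
        Polynomial.coeff_X_pow, Algebra.smul_def, apply_ite]
    refine ⟨fun d => ⟨_, (coeff_aeval d).symm⟩, fun d hd => ?_⟩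
    have d_ne (k : ℕ) : d ≠ m * k := fun h => hd ⟨k, h⟩
    simp [coeff_aeval, d_ne]
  · rintro ⟨hrange, hdvd⟩
    rw [P.as_sum_support]
    refine Subalgebra.sum_mem _ fun d hd => ?_
    obtain ⟨k, rfl⟩ : m ∣ d := by_contra fun h => Polynomial.mem_support_iff.mp hd (hdvd d h)
    obtain ⟨r, hr⟩ := hrange (m * k)
    rw [← hr, ← mul_one (algebraMap R S r), ← Algebra.smul_def, ← Polynomial.smul_monomial,
      Polynomial.monomial_one_right_eq_X_pow, pow_mul]
    exact Subalgebra.smul_mem _ (pow_mem (Algebra.self_mem_adjoin_singleton R _) k) r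

theorem expand_mem_adjoin_X_pow_mul {R S : Type*} [CommSemiring R] [CommSemiring S] [Algebra R S]
    {a b : ℕ} (hb : 0 < b) (hab : a.Coprime b) {Q : S[X]}
    (hQ : Polynomial.expand S b Q ∈ Algebra.adjoin R {(Polynomial.X : S[X]) ^ a}) :
    Polynomial.expand S b Q ∈ Algebra.adjoin R {(Polynomial.X : S[X]) ^ (a * b)} := by
  obtain ⟨coeff_mem, coeff_eq_zero⟩ := mem_adjoin_X_pow_iff.mp hQ
  refine mem_adjoin_X_pow_iff.mpr ⟨coeff_mem, fun d hd => ?_⟩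
  by_cases ha : a ∣ d
  · have hbd : ¬ b ∣ d := fun h => hd (hab.mul_dvd_of_dvd_of_dvd ha h)
    rw [Polynomial.coeff_expand hb, if_neg hbd]
  · exact coeff_eq_zero d ha

variable {G D : Type*} [AddGroup G] [Fintype G] [CommRing D]

theorem taylor_prod_X_sub_C (φ : G →+ D) (g : G) :
    Polynomial.taylor (φ g) (∏ h, (Polynomial.X - Polynomial.C (φ h))) =
      ∏ h, (Polynomial.X - Polynomial.C (φ h)) := by
  rw [← Polynomial.taylorAlgHom_apply, map_prod]
  refine Fintype.prod_equiv (Equiv.subRight g) _ _ fun h => ?_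
  simp only [map_sub, Polynomial.taylorAlgHom_apply, Polynomial.taylor_X, Polynomial.taylor_C,
    Equiv.subRight_apply]
  ring

variable [IsDomain D]

theorem prod_X_sub_C_dvd_of_eval_eq_zero {ι : Type*} [Fintype ι] {v : ι → D}
    (hv : Function.Injective v) {P : D[X]} (hP : ∀ i, P.eval (v i) = 0) :
    ∏ i, (Polynomial.X - Polynomial.C (v i)) ∣ P := by
  obtain rfl | hP0 := eq_or_ne P 0
  · exact dvd_zero _
  have hle : Finset.univ.val.map v ≤ P.roots := by
    rw [Multiset.le_iff_subset (Finset.univ.nodup.map hv)]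
    intro x hx
    obtain ⟨i, -, rfl⟩ := Multiset.mem_map.mp hx
    exact (Polynomial.mem_roots hP0).mpr (hP i)
  simpa using (Multiset.prod_X_sub_C_dvd_iff_le_roots hP0 _).mpr hle

theorem exists_eq_comp_prod_X_sub_C_of_taylor_eq {φ : G →+ D} (hφ : Function.Injective φ)
    {P : D[X]} (hP : ∀ g, Polynomial.taylor (φ g) P = P) :
    ∃ Q : D[X], P = Q.comp (∏ g, (Polynomial.X - Polynomial.C (φ g))) := by
  set N : D[X] := ∏ g, (Polynomial.X - Polynomial.C (φ g)) with hN
  have monic_N : N.Monic := Polynomial.monic_prod_X_sub_C _ _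
  induction hn : P.natDegree using Nat.strong_induction_on generalizing P with
  | _ n ih =>
  have eval_eq (g : G) : P.eval (φ g) = P.eval 0 := by
    simpa [Polynomial.taylor_apply] using congrArg (Polynomial.eval 0) (hP g)
  obtain ⟨T, hT⟩ : N ∣ P - Polynomial.C (P.eval 0) :=
    prod_X_sub_C_dvd_of_eval_eq_zero hφ fun g => by simp [eval_eq]
  obtain rfl | hT0 := eq_or_ne T 0
  · exact ⟨Polynomial.C (P.eval 0), by simpa [sub_eq_zero] using hT⟩
  have taylor_T (g : G) : Polynomial.taylor (φ g) T = T := by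
    refine mul_left_cancel₀ monic_N.ne_zero ?_
    calc N * Polynomial.taylor (φ g) T = Polynomial.taylor (φ g) (N * T) := by
          rw [Polynomial.taylor_mul, hN, taylor_prod_X_sub_C]
      _ = N * T := by rw [← hT, map_sub, hP, Polynomial.taylor_C]
  have natDegree_T : T.natDegree < n := by
    have hdeg := congrArg Polynomial.natDegree hT
    rw [Polynomial.natDegree_sub_C, monic_N.natDegree_mul' hT0, hN,
      Polynomial.natDegree_finsetProd_X_sub_C_eq_card, Finset.card_univ] at hdeg
    have := Fintype.card_pos (α := G)
    omega
  obtain ⟨Q, hQ⟩ := ih _ natDegree_T taylor_T rfl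
  exact ⟨Polynomial.C (P.eval 0) + Polynomial.X * Q, by simp [← hQ, ← hT]⟩

end Polynomial

section DifferenceAlgebra

variable (σ R : Type*) [CommRing R]

/-- The algebra of polynomials in the differences of the variables; its elements are invariant under
a common translation of the variables. -/
noncomputable def differenceAlgebra : Subalgebra R (MvPolynomial σ R) :=
  Algebra.adjoin R {d | ∃ i j : σ, d = X i - X j}

variable {σ R}

theorem aeval_add_const_of_mem_differenceAlgebra {S : Type*} [CommRing S] [Algebra R S]
    {f : MvPolynomial σ R} (hf : f ∈ differenceAlgebra σ R) (v : σ → S) (s : S) :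
    aeval (fun i => v i + s) f = aeval v f := by
  refine AlgHom.adjoin_le_equalizer (aeval fun i => v i + s) (aeval v) ?_ hf
  rintro _ ⟨i, j, rfl⟩
  simp

variable (σ R) [Fintype σ] [DecidableEq σ]

/-- The discriminant `∏_{i ≠ j} (x_i - x_j)` of the monic polynomial with roots `x_i`, up to sign:
each unordered pair of variables contributes both of its orderings. -/
noncomputable def rootDiscriminant : MvPolynomial σ R :=
  ∏ i, ∏ j ∈ Finset.univ.erase i, (X i - X j)

theorem rootDiscriminant_mem_differenceAlgebra :
    rootDiscriminant σ R ∈ differenceAlgebra σ R :=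
  prod_mem fun i _ => prod_mem fun j _ => Algebra.subset_adjoin ⟨i, j, rfl⟩

theorem rootDiscriminant_isSymmetric : (rootDiscriminant σ R).IsSymmetric := by
  intro g
  simp only [rootDiscriminant, map_prod, map_sub, rename_X]
  refine Fintype.prod_equiv g _ _ fun i => Finset.prod_equiv g ?_ fun _ _ => rfl
  simp

end DifferenceAlgebra

section Restriction

open scoped Polynomial

variable (R : Type*) {σ K : Type*} [CommRing R] [CommRing K] [Algebra R K]

/-- Restriction of a polynomial to the line `t ↦ (c i * t)_i` spanned by `c`. The map `ψ` of the
theorem is the case where `c` enumerates `ZMod p`. -/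
noncomputable def restrictLine (c : σ → K) : MvPolynomial σ R →ₐ[R] K[X] :=
  aeval fun i => Polynomial.C (c i) * Polynomial.X

/-- Restriction of a polynomial to the plane `(t, u) ↦ (c i * t + c i ^ 2 * u)_i`, where `t` is the
outer and `u` the inner variable of `K[X][X]`. The quadratic term turns the substitution
`c ↦ c + b` into the shift `t ↦ t + 2bu`, up to a common translation. -/
noncomputable def restrictPlane (c : σ → K) : MvPolynomial σ R →ₐ[R] K[X][X] :=
  aeval fun i => Polynomial.C (Polynomial.C (c i)) * Polynomial.X +
    Polynomial.C (Polynomial.C (c i ^ 2) * Polynomial.X)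

variable {R}

theorem map_eval_zero_restrictPlane (c : σ → K) (f : MvPolynomial σ R) :
    (restrictPlane R c f).map (Polynomial.evalRingHom 0) = restrictLine R c f := by
  have hcomp : (Polynomial.mapAlgHom ((Polynomial.aeval (0 : K)).restrictScalars R)).comp
      (restrictPlane R c) = restrictLine R c := by
    ext i : 1
    simp [restrictPlane, restrictLine]
  exact DFunLike.congr_fun hcomp f

theorem restrictLine_esymm [Fintype σ] (c : σ → K) (n : ℕ) :
    restrictLine R c (esymm σ R n) = Polynomial.C (aeval c (esymm σ R n)) * Polynomial.X ^ n := by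
  simp only [restrictLine, esymm, map_sum, map_prod, aeval_X, Finset.sum_mul]
  refine Finset.sum_congr rfl fun t ht => ?_
  rw [Finset.prod_mul_distrib, Finset.prod_const, (Finset.mem_powersetCard.mp ht).2]

theorem taylor_restrictPlane {c : σ → K} {b : K} {g : Equiv.Perm σ} (hg : ∀ i, c (g i) = c i + b)
    {f : MvPolynomial σ R} (hdiff : f ∈ differenceAlgebra σ R) (hsymm : f.IsSymmetric) :
    Polynomial.taylor (Polynomial.C (2 * b) * Polynomial.X) (restrictPlane R c f) =
      restrictPlane R c f := by
  set v : σ → K[X][X] := fun i => Polynomial.C (Polynomial.C (c i)) * Polynomial.X +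
    Polynomial.C (Polynomial.C (c i ^ 2) * Polynomial.X)
  set r : K[X] := Polynomial.C (2 * b) * Polynomial.X
  set s : K[X][X] := Polynomial.C (Polynomial.C b) * Polynomial.X +
    Polynomial.C (Polynomial.C (b ^ 2) * Polynomial.X)
  have taylor_v (i : σ) : Polynomial.taylor r (v i) + s = v (g i) := by
    simp only [v, r, s, hg, map_add, Polynomial.taylor_mul, Polynomial.taylor_X,
      Polynomial.taylor_C]
    simp only [Polynomial.C_mul, Polynomial.C_add, Polynomial.C_pow, map_ofNat]
    ring
  calc Polynomial.taylor r (restrictPlane R c f)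
      = aeval (fun i => Polynomial.taylor r (v i)) f :=
        DFunLike.congr_fun (comp_aeval v ((Polynomial.taylorAlgHom r).restrictScalars R)) f
    _ = aeval (fun i => Polynomial.taylor r (v i) + s) f :=
        (aeval_add_const_of_mem_differenceAlgebra hdiff _ s).symm
    _ = aeval v (rename g f) := by simp only [taylor_v, aeval_rename, Function.comp_def]
    _ = restrictPlane R c f := by rw [hsymm g, restrictPlane]

end Restriction

theorem adjoin_esymm_eq_symmetricSubalgebra (σ R : Type*) [CommRing R] [Fintype σ] :
    Algebra.adjoin R (Set.range fun i : Fin (Fintype.card σ) => esymm σ R (i + 1)) =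
      symmetricSubalgebra σ R := by
  rw [Algebra.adjoin_range_eq_range_aeval]
  refine le_antisymm ?_ fun f hf => ?_
  · rintro _ ⟨g, rfl⟩
    change aeval _ g ∈ _
    rw [← esymmAlgHom_apply]
    exact (esymmAlgHom σ R (Fintype.card σ) g).2
  · obtain ⟨g, hg⟩ := esymmAlgHom_surjective R le_rfl ⟨f, hf⟩
    exact ⟨g, by simpa [esymmAlgHom_apply] using congrArg Subtype.val hg⟩

section FiniteField

open scoped Polynomial

variable {R σ K : Type*} [CommRing R] [Field K] [Fintype K] [Algebra R K]

theorem exists_restrictLine_eq_expand (hK : ringChar K ≠ 2) (c : σ ≃ K)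
    {f : MvPolynomial σ R} (hdiff : f ∈ differenceAlgebra σ R) (hsymm : f.IsSymmetric) :
    ∃ Q : K[X], restrictLine R c f = Polynomial.expand K (Fintype.card K) Q := by
  have two_ne_zero : (2 : K) ≠ 0 := Ring.two_ne_zero hK
  let φ : K →+ K[X] :=
    (AddMonoidHom.mulRight Polynomial.X).comp Polynomial.C.toAddMonoidHom
  have φ_injective : Function.Injective φ := fun a b h =>
    Polynomial.C_injective (mul_right_cancel₀ Polynomial.X_ne_zero h)
  have taylor_eq (a : K) :
      Polynomial.taylor (φ a) (restrictPlane R c f) = restrictPlane R c f := by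
    let g : Equiv.Perm σ := c.trans ((Equiv.addRight (a / 2)).trans c.symm)
    have := taylor_restrictPlane (g := g) (c := c) (b := a / 2) (by simp [g]) hdiff hsymm
    rwa [mul_div_cancel₀ _ two_ne_zero] at this
  obtain ⟨Q, hQ⟩ := exists_eq_comp_prod_X_sub_C_of_taylor_eq φ_injective taylor_eq
  refine ⟨Q.map (Polynomial.evalRingHom 0), ?_⟩
  rw [← map_eval_zero_restrictPlane, hQ, Polynomial.map_comp, Polynomial.expand_eq_comp_X_pow]
  simp [φ, Polynomial.map_prod]

theorem aeval_equiv_esymm [Fintype σ] (c : σ ≃ K) {n : ℕ} (hn0 : n ≠ 0) (hn : n ≤ Fintype.card K) :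
    aeval c (esymm σ R n) = if n = Fintype.card K - 1 then -1 else 0 := by
  set q := Fintype.card K
  have one_lt_q : 1 < q := Fintype.one_lt_card
  set P : K[X] := Polynomial.X ^ q - Polynomial.X with hP
  have natDegree_P : P.natDegree = q := FiniteField.X_pow_card_sub_X_natDegree_eq K one_lt_q
  have roots_P : P.roots = Finset.univ.val := FiniteField.roots_X_pow_card_sub_X K
  have monic_P : P.Monic := Polynomial.monic_X_pow_sub (by simpa using one_lt_q)
  have esymm_eq : aeval c (esymm σ R n) = P.roots.esymm n := by
    rw [aeval_esymm_eq_multiset_esymm, roots_P, ← Finset.map_univ_equiv c]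
    simp
  have vieta : P.coeff (q - n) = (-1) ^ n * P.roots.esymm n := by
    have h := Polynomial.coeff_eq_esymm_roots_of_card (p := P)
      (by simp [roots_P, natDegree_P, q]) (k := q - n) (by simp [natDegree_P])
    rwa [monic_P.leadingCoeff, one_mul, natDegree_P, Nat.sub_sub_self hn] at h
  have coeff_P : P.coeff (q - n) = if n = q - 1 then -1 else 0 := by
    simp only [hP, Polynomial.coeff_sub, Polynomial.coeff_X_pow, Polynomial.coeff_X]
    rw [if_neg (by omega), zero_sub]
    split_ifs <;> first | omega | simp
  calc aeval c (esymm σ R n) = (-1) ^ n * P.coeff (q - n) := by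
        rw [vieta, esymm_eq, ← mul_assoc, ← mul_pow, neg_one_mul, neg_neg, one_pow, one_mul]
    _ = if n = q - 1 then -1 else 0 := by
        rw [coeff_P]
        split_ifs with h
        · rw [← pow_succ, h, Nat.sub_add_cancel one_lt_q.le, FiniteField.pow_card]
        · rw [mul_zero]

theorem prod_erase_sub_eq_neg_one [DecidableEq K] (a : K) :
    ∏ b ∈ Finset.univ.erase a, (a - b) = -1 := by
  calc ∏ b ∈ Finset.univ.erase a, (a - b)
      = ∏ d ∈ Finset.univ.erase (0 : K), d :=
        Finset.prod_equiv (Equiv.subLeft a) (by simp [sub_eq_zero, eq_comm]) fun _ _ => rfl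
    _ = ∏ d : {d : K // d ≠ 0}, (d : K) := Finset.prod_subtype _ (by simp) _
    _ = ∏ u : Kˣ, (u : K) := (Fintype.prod_equiv unitsEquivNeZero _ _ fun _ => rfl).symm
    _ = -1 := by
      simpa using congrArg (Units.coeHom K) (FiniteField.prod_univ_units_id_eq_neg_one (K := K))

theorem restrictLine_mem_adjoin_of_isSymmetric (c : σ ≃ K) {f : MvPolynomial σ R}
    (hf : f.IsSymmetric) :
    restrictLine R c f ∈
      Algebra.adjoin R {(Polynomial.X : K[X]) ^ (Fintype.card K - 1)} := by
  have := Fintype.ofEquiv K c.symm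
  suffices symmetricSubalgebra σ R ≤ (Algebra.adjoin R
      {(Polynomial.X : K[X]) ^ (Fintype.card K - 1)}).comap (restrictLine R c) from this hf
  rw [← adjoin_esymm_eq_symmetricSubalgebra, Algebra.adjoin_le_iff]
  rintro _ ⟨i, rfl⟩
  simp only [Subalgebra.coe_comap, Set.mem_preimage, SetLike.mem_coe]
  rw [restrictLine_esymm,
    aeval_equiv_esymm c (Nat.add_one_ne_zero i) (i.2.trans_eq (Fintype.card_congr c))]
  split_ifs with hi
  · rw [← hi, Polynomial.C_neg, Polynomial.C_1, neg_one_mul]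
    exact neg_mem (Algebra.self_mem_adjoin_singleton R _)
  · simp

theorem restrictLine_rootDiscriminant [Fintype σ] [DecidableEq σ] (c : σ ≃ K) :
    restrictLine R c (rootDiscriminant σ R) =
      -Polynomial.X ^ (Fintype.card K ^ 2 - Fintype.card K) := by
  classical
  have prod_row (i : σ) : ∏ j ∈ Finset.univ.erase i, (c i - c j) = -1 := by
    rw [← prod_erase_sub_eq_neg_one (c i)]
    exact Finset.prod_equiv c (by simp) fun _ _ => rfl
  have card_erase (i : σ) : (Finset.univ.erase i).card = Fintype.card K - 1 := by
    rw [Finset.card_erase_of_mem (Finset.mem_univ i), Finset.card_univ, Fintype.card_congr c]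
  calc restrictLine R c (rootDiscriminant σ R)
      = ∏ i, ∏ j ∈ Finset.univ.erase i, Polynomial.C (c i - c j) * Polynomial.X := by
        simp [rootDiscriminant, restrictLine, sub_mul]
    _ = ∏ _i : σ, -Polynomial.X ^ (Fintype.card K - 1) := by
        refine Finset.prod_congr rfl fun i _ => ?_
        rw [Finset.prod_mul_distrib, ← map_prod, prod_row, Finset.prod_const, card_erase]
        simp
    _ = -Polynomial.X ^ (Fintype.card K ^ 2 - Fintype.card K) := by
        have neg_one_pow : (-1 : K[X]) ^ Fintype.card K = -1 := by
          simpa using congrArg Polynomial.C (FiniteField.pow_card (-1 : K))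
        rw [Finset.prod_const, Finset.card_univ, Fintype.card_congr c, neg_pow, neg_one_pow,
          ← pow_mul, Nat.sub_mul, one_mul, sq, neg_one_mul]

theorem stmt_16_general (hK : ringChar K ≠ 2) (c : σ ≃ K) :
    (differenceAlgebra σ R ⊓ symmetricSubalgebra σ R).map (restrictLine R c) =
      Algebra.adjoin R {(Polynomial.X : K[X]) ^ (Fintype.card K ^ 2 - Fintype.card K)} := by
  classical
  have := Fintype.ofEquiv K c.symm
  set q := Fintype.card K with hq
  apply le_antisymm
  · rintro _ ⟨f, ⟨hdiff, hsymm⟩, rfl⟩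
    have one_le_q : 1 ≤ q := Fintype.card_pos
    have coprime : (q - 1).Coprime q :=
      (Nat.coprime_self_sub_left one_le_q).mpr (Nat.coprime_one_left q)
    obtain ⟨Q, hQ⟩ := exists_restrictLine_eq_expand hK c hdiff hsymm
    have hmem := restrictLine_mem_adjoin_of_isSymmetric c hsymm
    rw [hQ] at hmem
    rw [sq, ← Nat.sub_one_mul, RingHom.coe_coe, hQ]
    exact expand_mem_adjoin_X_pow_mul one_le_q coprime hmem
  · rw [Algebra.adjoin_le_iff, Set.singleton_subset_iff]
    refine ⟨-rootDiscriminant σ R, ⟨neg_mem (rootDiscriminant_mem_differenceAlgebra σ R),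
      neg_mem (rootDiscriminant_isSymmetric σ R)⟩, ?_⟩
    simp [restrictLine_rootDiscriminant c, hq]

end FiniteField

theorem bijective_natCast_succ (n : ℕ) [NeZero n] :
    Function.Bijective fun i : Fin n => (((i : ℕ) + 1 : ℕ) : ZMod n) := by
  rw [Fintype.bijective_iff_injective_and_card]
  refine ⟨fun i j hij => ?_, by simp [ZMod.card]⟩
  have modEq : (i : ℕ) ≡ j [MOD n] := by
    simpa [← ZMod.natCast_eq_natCast_iff] using hij
  exact Fin.ext (modEq.eq_of_lt_of_lt i.2 j.2)

/-- Let `p` be an odd prime, `ψ : ℤ[x₁, …, x_p] → (ZMod p)[X]` the ring homomorphism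
sending `x_i ↦ i·X` (for `i = 1, …, p`; here `x_i = X i` with `i : Fin p` corresponding
to the index `(i : ℕ) + 1`), and `A` the `ℤ`-subalgebra generated by the differences
`x_i - x_j`.  The image under `ψ` of the `S_p`-invariant elements of `A` is the subring
of `(ZMod p)[X]` generated by `X^(p²-p)`. -/
theorem stmt_16 (p : ℕ) (hp : p.Prime) (hodd : Odd p)
    (ψ : MvPolynomial (Fin p) ℤ →+* Polynomial (ZMod p))
    (hψ : ψ = (aeval fun i : Fin p =>
      Polynomial.C ((((i : ℕ) + 1 : ℕ) : ZMod p)) * Polynomial.X :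
        MvPolynomial (Fin p) ℤ →ₐ[ℤ] Polynomial (ZMod p)).toRingHom)
    (A : Subalgebra ℤ (MvPolynomial (Fin p) ℤ))
    (hA : A = Algebra.adjoin ℤ {d : MvPolynomial (Fin p) ℤ | ∃ i j : Fin p, d = X i - X j}) :
    ψ '' {f : MvPolynomial (Fin p) ℤ | f ∈ A ∧ ∀ g : Equiv.Perm (Fin p), rename (⇑g) f = f} =
      ↑(Subring.closure {(Polynomial.X : Polynomial (ZMod p)) ^ (p ^ 2 - p)}) := by
  subst hψ hA
  have : Fact p.Prime := ⟨hp⟩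
  have hchar : ringChar (ZMod p) ≠ 2 :=
    (ZMod.ringChar_zmod_n p).trans_ne (hodd.ne_two_of_dvd_nat dvd_rfl)
  have image_eq := stmt_16_general (R := ℤ) hchar (Equiv.ofBijective _ (bijective_natCast_succ p))
  rw [ZMod.card] at image_eq
  exact (congrArg SetLike.coe image_eq).trans (congrArg SetLike.coe (Algebra.adjoin_int _))
end

section
/- Let A be the ℤ-subalgebra of ℤ[x₁, x₂, x₃] generated by the differences x_i − x_j. Then: (a) the set of elements of A fixed by every permutation of the variables equals the ℤ-subalgebra generated by γ₂, γ₃ and δ; and (b) the kernel of the ℤ-algebra homomorphism ℤ[X, Y, Z] → ℤ[x₁, x₂, x₃] sending X ↦ γ₂, Y ↦ γ₃, Z ↦ δ is the principal ideal generated by 27Z − 4X³ − Y². -/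
open MvPolynomial

/-!
Restrict polynomials to the first coordinate axis, `(x₁, x₂, x₃) = (t, 0, 0)`. If `f` is symmetric
and invariant under simultaneous translation, then `∂₁f + ∂₂f + ∂₃f = 0` and `∂₂f = ∂₃f` on this
axis, so the restriction `w(t)` of `f` satisfies `w' = -2 ∂₂f(t, 0, 0)`: its odd coefficients are
even, and its linear coefficient vanishes. Since `γ₂ ↦ -t²` and `γ₃ ↦ 2t³`, some polynomial in
`γ₂, γ₃` of no larger degree has the same restriction as `f`. The difference vanishes on the axis,
hence by translation invariance on the plane `x₂ = x₃`; a symmetric polynomial divisible by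
`x₂ - x₃` is divisible by `δ`, and one concludes by induction on the degree.

For the relations, `γ₂` and `δ` are algebraically independent because `δ` restricts to `0` while
`γ₂` restricts to a nonconstant polynomial. Modulo `27Z - 4X³ - Y²` every polynomial is
`P(X, Z) + Y Q(X, Z)`, and `x ↦ -x`, which fixes `γ₂` and `δ` and negates `γ₃`, separates the two
summands.
-/

namespace DifferenceInvariants

lemma mul_pow_dvd_of_prime {M : Type*} [CommMonoidWithZero M] [IsCancelMulZero M] {p a f : M}
    (hp : Prime p) (hpa : ¬p ∣ a) (ha : a ∣ f) {n : ℕ} (hpf : p ^ n ∣ f) : a * p ^ n ∣ f := by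
  obtain ⟨b, rfl⟩ := ha
  exact mul_dvd_mul_left a (hp.pow_dvd_of_dvd_mul_left n hpa hpf)

section Symmetric

variable {σ R : Type*} [CommRing R]

lemma X_sub_X_dvd_sub_aeval_update [DecidableEq σ] (i j : σ) (f : MvPolynomial σ R) :
    X i - X j ∣ f - aeval (Function.update X i (X j)) f := by
  let q := Ideal.Quotient.mkₐ R (Ideal.span {(X i - X j : MvPolynomial σ R)})
  have hq : q.comp (aeval (Function.update X i (X j))) = q := by
    refine MvPolynomial.algHom_ext fun k ↦ ?_
    rcases eq_or_ne k i with rfl | hk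
    · have hX : q (X k) = q (X j) :=
        (Ideal.Quotient.mk_eq_mk_iff_sub_mem _ _).2 (Ideal.mem_span_singleton_self _)
      simpa using hX.symm
    · simp [hk]
  rw [← Ideal.mem_span_singleton, ← Ideal.Quotient.mk_eq_mk_iff_sub_mem]
  exact (DFunLike.congr_fun hq f).symm

lemma X_sub_X_dvd_iff [DecidableEq σ] {i j : σ} {f : MvPolynomial σ R} :
    X i - X j ∣ f ↔ aeval (Function.update X i (X j)) f = (0 : MvPolynomial σ R) := by
  refine ⟨?_, fun h ↦ by simpa only [h, sub_zero] using X_sub_X_dvd_sub_aeval_update i j f⟩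
  rintro ⟨q, rfl⟩
  rcases eq_or_ne j i with rfl | hji <;> simp [*]

lemma prime_X_sub_X [IsDomain R] {i j : σ} (hij : i ≠ j) :
    Prime (X i - X j : MvPolynomial σ R) := by
  classical
  refine ⟨sub_ne_zero.2 ((X_injective (R := R)).ne hij), fun hu ↦ ?_, fun f g h ↦ ?_⟩
  · exact one_ne_zero (α := MvPolynomial σ R) (by simpa using X_sub_X_dvd_iff.1 (hu.dvd (a := 1)))
  · simpa only [X_sub_X_dvd_iff, map_mul, mul_eq_zero] using h

lemma mvPolynomial_two_ne_zero (h2 : (2 : R) ≠ 0) : (2 : MvPolynomial σ R) ≠ 0 := by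
  rw [← map_ofNat C 2]
  exact C_ne_zero.2 h2

lemma sq_X_sub_X_dvd_of_isSymmetric [IsDomain R] (h2 : (2 : R) ≠ 0) {i j : σ} (hij : i ≠ j)
    {f : MvPolynomial σ R} (hf : f.IsSymmetric) (hdvd : X i - X j ∣ f) : (X i - X j) ^ 2 ∣ f := by
  classical
  obtain ⟨q, rfl⟩ := hdvd
  have hswap : rename (Equiv.swap i j) q = -q := by
    refine mul_left_cancel₀ (prime_X_sub_X hij).ne_zero ?_
    have hfix := hf (Equiv.swap i j)
    rw [map_mul, map_sub, rename_X, rename_X, Equiv.swap_apply_left, Equiv.swap_apply_right]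
      at hfix
    linear_combination -hfix
  have hspec : aeval (Function.update X i (X j)) (rename (Equiv.swap i j) q) =
      (aeval (Function.update X i (X j)) q : MvPolynomial σ R) := by
    rw [aeval_rename]
    congr 2
    ext1 k
    by_cases hki : k = i
    · simp [hki, hij.symm]
    · by_cases hkj : k = j
      · simp [hkj, hij.symm]
      · simp [hki, Equiv.swap_apply_of_ne_of_ne hki hkj]
  rw [hswap, map_neg] at hspec
  rw [sq]
  refine mul_dvd_mul_left _ (X_sub_X_dvd_iff.2 ?_)
  exact (mul_eq_zero.1 (by linear_combination -hspec)).resolve_left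
    (mvPolynomial_two_ne_zero (σ := σ) h2)

lemma X_apply_sub_X_apply_dvd_of_isSymmetric {f : MvPolynomial σ R} (hf : f.IsSymmetric)
    (e : Equiv.Perm σ) {i j : σ} (hdvd : X i - X j ∣ f) : X (e i) - X (e j) ∣ f := by
  simpa only [hf e, map_sub, rename_X] using map_dvd (rename e) hdvd

lemma rename_swap_pderiv_of_isSymmetric [DecidableEq σ] {f : MvPolynomial σ R}
    (hf : f.IsSymmetric) (i j : σ) :
    rename (Equiv.swap i j) (pderiv i f) = pderiv j f := by
  rw [← pderiv_rename (Equiv.swap i j).injective, hf, Equiv.swap_apply_left]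

end Symmetric

section DifferenceSubalgebra

variable {σ R : Type*} [CommRing R]

variable (σ R) in
/-- The subalgebra of `R[xᵢ | i ∈ σ]` generated by the differences `xᵢ - xⱼ`, that is, the
polynomials invariant under simultaneous translation of all variables. -/
noncomputable def differenceSubalgebra : Subalgebra R (MvPolynomial σ R) :=
  Algebra.adjoin R {d | ∃ i j : σ, d = X i - X j}

lemma X_sub_X_mem_differenceSubalgebra (i j : σ) :
    (X i - X j : MvPolynomial σ R) ∈ differenceSubalgebra σ R :=
  Algebra.subset_adjoin ⟨i, j, rfl⟩

lemma mem_differenceSubalgebra_iff (k : σ) {f : MvPolynomial σ R} :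
    f ∈ differenceSubalgebra σ R ↔ aeval (fun i ↦ X i - X k) f = f := by
  constructor
  · suffices differenceSubalgebra σ R ≤ AlgHom.equalizer (aeval fun i ↦ X i - X k) (AlgHom.id R _)
      from fun hf ↦ this hf
    rw [differenceSubalgebra, Algebra.adjoin_le_iff]
    rintro _ ⟨i, j, rfl⟩
    simp
  · intro hf
    rw [← hf]
    refine Algebra.adjoin_mono (s := Set.range fun i ↦ X i - X k) ?_ ?_
    · rintro _ ⟨i, rfl⟩
      exact ⟨i, k, rfl⟩
    · rw [Algebra.adjoin_range_eq_range_aeval]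
      exact ⟨f, rfl⟩

lemma sum_pderiv_eq_zero_of_mem_differenceSubalgebra [Fintype σ] {f : MvPolynomial σ R}
    (hf : f ∈ differenceSubalgebra σ R) : ∑ i, pderiv i f = 0 := by
  classical
  induction hf using Algebra.adjoin_induction with
  | mem f hf =>
    obtain ⟨i, j, rfl⟩ := hf
    simp [pderiv_X, Pi.single_apply]
  | algebraMap a => simp
  | add f g _ _ hf hg => simp [Finset.sum_add_distrib, hf, hg]
  | mul f g _ _ hf hg => simp [Finset.sum_add_distrib, ← Finset.mul_sum, hf, hg]

lemma mem_differenceSubalgebra_inf_symmetricSubalgebra_of_mul_mem [IsDomain R] [Nonempty σ]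
    {f g : MvPolynomial σ R} (hg : g ∈ differenceSubalgebra σ R ⊓ symmetricSubalgebra σ R)
    (hg0 : g ≠ 0) (hgf : g * f ∈ differenceSubalgebra σ R ⊓ symmetricSubalgebra σ R) :
    f ∈ differenceSubalgebra σ R ⊓ symmetricSubalgebra σ R := by
  inhabit σ
  have hfix (ψ : MvPolynomial σ R →ₐ[R] MvPolynomial σ R) (h : ψ g = g)
      (h' : ψ (g * f) = g * f) : ψ f = f :=
    mul_left_cancel₀ hg0 (by rw [← h', map_mul, h])
  have htranslate {p : MvPolynomial σ R} := mem_differenceSubalgebra_iff default (f := p)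
  exact ⟨htranslate.2 (hfix _ (htranslate.1 hg.1) (htranslate.1 hgf.1)),
    fun e ↦ hfix _ (hg.2 e) (hgf.2 e)⟩

end DifferenceSubalgebra

section AxisRestrict

variable {σ R : Type*} [CommRing R] [DecidableEq σ]

/-- Restriction of polynomials to the `i`-th coordinate axis: `xᵢ` becomes the variable of `R[X]`
and the other `xⱼ` become `0`. -/
noncomputable def axisRestrict (i : σ) : MvPolynomial σ R →ₐ[R] Polynomial R :=
  aeval (Pi.single i Polynomial.X)

@[simp]
lemma axisRestrict_X_self (i : σ) : axisRestrict i (X i : MvPolynomial σ R) = Polynomial.X := by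
  simp [axisRestrict]

@[simp]
lemma axisRestrict_X_of_ne {i j : σ} (h : j ≠ i) :
    axisRestrict i (X j : MvPolynomial σ R) = 0 := by
  simp [axisRestrict, h]

lemma coeff_zero_axisRestrict (i : σ) (f : MvPolynomial σ R) :
    (axisRestrict i f).coeff 0 = constantCoeff f := by
  have h : Polynomial.constantCoeff.comp (axisRestrict i : MvPolynomial σ R →ₐ[R] _).toRingHom =
      constantCoeff := by
    refine MvPolynomial.ringHom_ext (fun a ↦ by simp [axisRestrict]) fun j ↦ ?_
    rcases eq_or_ne j i with rfl | hj <;> simp [*]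
  exact DFunLike.congr_fun h f

lemma natDegree_axisRestrict_le (i : σ) (f : MvPolynomial σ R) :
    (axisRestrict i f).natDegree ≤ f.totalDegree := by
  have hdeg (j : σ) : ((Pi.single i Polynomial.X : σ → Polynomial R) j).natDegree ≤ 1 := by
    rcases eq_or_ne j i with rfl | hj
    · simpa using Polynomial.natDegree_X_le
    · simp [hj]
  simpa [axisRestrict] using aeval_natDegree_le f le_rfl _ hdeg

lemma axisRestrict_rename_of_apply_eq {i : σ} {e : Equiv.Perm σ} (he : e i = i)
    (f : MvPolynomial σ R) : axisRestrict i (rename e f) = axisRestrict i f := by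
  rw [axisRestrict, aeval_rename]
  congr 2
  ext1 j
  rcases eq_or_ne j i with rfl | hj
  · simp [he]
  · simp [hj, he ▸ e.injective.ne hj]

lemma derivative_axisRestrict (i : σ) (f : MvPolynomial σ R) :
    Polynomial.derivative (axisRestrict i f) = axisRestrict i (pderiv i f) := by
  induction f using MvPolynomial.induction_on with
  | C a => simp [axisRestrict]
  | add f g hf hg => simp only [map_add, hf, hg]
  | mul_X f j hf =>
    rcases eq_or_ne j i with rfl | hj
    · rw [map_mul, axisRestrict_X_self, Polynomial.derivative_mul, Polynomial.derivative_X, hf,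
        Derivation.leibniz, pderiv_X_self, map_add, smul_eq_mul, smul_eq_mul, map_mul, map_mul,
        axisRestrict_X_self, map_one]
      ring
    · simp [Derivation.leibniz, pderiv_X, hj]

lemma derivative_axisRestrict_add_smul [Fintype σ] {f : MvPolynomial σ R}
    (hf : f ∈ differenceSubalgebra σ R) (hsymm : f.IsSymmetric) {i j : σ} (hij : i ≠ j) :
    Polynomial.derivative (axisRestrict i f) +
      (Fintype.card σ - 1) • axisRestrict i (pderiv j f) = 0 := by
  have hpderiv : ∀ k ∈ Finset.univ.erase i,
      axisRestrict i (pderiv k f) = axisRestrict i (pderiv j f) := fun k hk ↦ by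
    rw [← rename_swap_pderiv_of_isSymmetric hsymm j k, axisRestrict_rename_of_apply_eq]
    exact Equiv.swap_apply_of_ne_of_ne hij (Finset.ne_of_mem_erase hk).symm
  have hsum := congrArg (axisRestrict i) (sum_pderiv_eq_zero_of_mem_differenceSubalgebra hf)
  rwa [map_sum, map_zero, ← Finset.add_sum_erase _ _ (Finset.mem_univ i),
    Finset.sum_congr rfl hpderiv, Finset.sum_const, Finset.card_erase_of_mem (Finset.mem_univ i),
    Finset.card_univ, ← derivative_axisRestrict] at hsum

lemma card_mul_coeff_one_axisRestrict [Fintype σ] {f : MvPolynomial σ R}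
    (hf : f ∈ differenceSubalgebra σ R) (hsymm : f.IsSymmetric) (i : σ) :
    Fintype.card σ * (axisRestrict i f).coeff 1 = 0 := by
  have hpderiv (j : σ) : constantCoeff (pderiv j f) = (axisRestrict i f).coeff 1 := by
    rw [← rename_swap_pderiv_of_isSymmetric hsymm i j, constantCoeff_rename,
      ← coeff_zero_axisRestrict i, ← derivative_axisRestrict, Polynomial.coeff_derivative]
    simp
  simpa [hpderiv] using congrArg constantCoeff (sum_pderiv_eq_zero_of_mem_differenceSubalgebra hf)

end AxisRestrict

section DifferenceProduct

variable (σ R : Type*) [CommRing R] [Fintype σ] [DecidableEq σ]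

/-- The product of `xᵢ - xⱼ` over all ordered pairs of distinct indices. As each unordered pair
occurs with both signs, this is the discriminant of `∏ᵢ (T - xᵢ)` up to sign. -/
noncomputable def differenceProduct : MvPolynomial σ R :=
  ∏ ij : σ × σ with ij.1 ≠ ij.2, (X ij.1 - X ij.2)

lemma differenceProduct_isSymmetric : (differenceProduct σ R).IsSymmetric := by
  intro e
  rw [differenceProduct, map_prod]
  exact Finset.prod_equiv (e.prodCongr e) (by simp) (by simp)

lemma differenceProduct_mem_differenceSubalgebra :
    differenceProduct σ R ∈ differenceSubalgebra σ R :=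
  prod_mem fun ij _ ↦ X_sub_X_mem_differenceSubalgebra ij.1 ij.2

lemma differenceProduct_ne_zero [IsDomain R] : differenceProduct σ R ≠ 0 :=
  Finset.prod_ne_zero_iff.2 fun _ hij ↦ (prime_X_sub_X (Finset.mem_filter.1 hij).2).ne_zero

lemma differenceProduct_isHomogeneous :
    (differenceProduct σ R).IsHomogeneous (Finset.card {ij : σ × σ | ij.1 ≠ ij.2}) := by
  rw [Finset.card_eq_sum_ones]
  exact IsHomogeneous.prod _ _ _ fun ij _ ↦ (isHomogeneous_X R _).sub (isHomogeneous_X R _)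

end DifferenceProduct

section Relations

variable {R S T : Type*} [CommRing R] [CommRing S] [IsDomain S] [Algebra R S]

theorem algebraicIndependent_of_map_eq_zero [CommRing T] [Algebra R T] {ι : Type*} {x : ι → S}
    {i : ι} (w : S →ₐ[R] T) (hx : AlgebraicIndependent R fun j : {j // j ≠ i} ↦ w (x j))
    (hxi : x i ≠ 0) (hwi : w (x i) = 0) : AlgebraicIndependent R x := by
  refine (AlgebraicIndependent.iff_transcendental_adjoin_image i).2 ⟨hx.of_comp w, fun halg ↦ ?_⟩
  -- Otherwise `x i` divides a nonzero polynomial in the other elements, which `w` then kills.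
  obtain ⟨⟨r, hr⟩, hr0, hdvd⟩ := halg.exists_nonzero_dvd (mem_nonZeroDivisors_of_ne_zero hxi)
  have hwr : w r = 0 := by
    obtain ⟨s, hs⟩ := hdvd
    simpa [hwi] using congrArg w hs
  rw [Set.image_eq_range, Algebra.adjoin_range_eq_range_aeval] at hr
  obtain ⟨p, rfl⟩ := hr
  have hp : p = 0 := hx.eq_zero_of_aeval_eq_zero p <| by
    rw [← hwr]
    exact (DFunLike.congr_fun (comp_aeval _ w) p).symm
  exact hr0 (Subtype.ext (by simp [hp]))

lemma exists_dvd_sub_rename_add_X_mul_rename (c : MvPolynomial (Fin 2) R)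
    (F : MvPolynomial (Fin 3) R) :
    ∃ P Q : MvPolynomial (Fin 2) R,
      rename ![0, 2] c - X 1 ^ 2 ∣ F - (rename ![0, 2] P + X 1 * rename ![0, 2] Q) := by
  induction F using MvPolynomial.induction_on with
  | C a => exact ⟨C a, 0, by simp⟩
  | add F G hF hG =>
    obtain ⟨P, Q, h⟩ := hF
    obtain ⟨P', Q', h'⟩ := hG
    refine ⟨P + P', Q + Q', (dvd_add h h').trans (dvd_of_eq ?_)⟩
    simp only [map_add]
    ring
  | mul_X F i hF =>
    obtain ⟨P, Q, h⟩ := hF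
    have hX := h.mul_right (X i)
    fin_cases i
    · refine ⟨P * X 0, Q * X 0, hX.trans (dvd_of_eq ?_)⟩
      simp only [map_mul, rename_X, Matrix.cons_val, Fin.mk_zero, Fin.isValue]
      ring
    · refine ⟨Q * c, P, (dvd_sub hX (dvd_mul_right _ (rename ![0, 2] Q))).trans (dvd_of_eq ?_)⟩
      simp only [map_mul, Fin.mk_one, Fin.isValue]
      ring
    · refine ⟨P * X 1, Q * X 1, hX.trans (dvd_of_eq ?_)⟩
      simp only [map_mul, rename_X, Matrix.cons_val, Fin.reduceFinMk, Fin.isValue]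
      ring

theorem ker_aeval_eq_span_of_sq_eq {x y z : S} (hxz : AlgebraicIndependent R ![x, z])
    (c : MvPolynomial (Fin 2) R) (hc : aeval ![x, z] c = y ^ 2) (ν : S →ₐ[R] S) (hx : ν x = x)
    (hy : ν y = -y) (hz : ν z = z) (hy0 : y ≠ 0) (h2 : (2 : S) ≠ 0) :
    RingHom.ker (aeval ![x, y, z] : MvPolynomial (Fin 3) R →ₐ[R] S) =
      Ideal.span {rename ![0, 2] c - X 1 ^ 2} := by
  have aeval_emb (P : MvPolynomial (Fin 2) R) :
      aeval ![x, y, z] (rename ![0, 2] P) = aeval ![x, z] P := by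
    rw [aeval_rename]
    congr 2
    ext i
    fin_cases i <;> rfl
  have ν_aeval (P : MvPolynomial (Fin 2) R) : ν (aeval ![x, z] P) = aeval ![x, z] P := by
    have h : ν.comp (aeval ![x, z]) = aeval ![x, z] := by
      ext i
      fin_cases i <;> simp [hx, hz]
    exact DFunLike.congr_fun h P
  have hrel : aeval ![x, y, z] (rename ![0, 2] c - X 1 ^ 2) = 0 := by simp [aeval_emb, hc]
  refine le_antisymm (fun F hF ↦ ?_) ((Ideal.span_singleton_le_iff_mem _).2 hrel)
  obtain ⟨P, Q, G, hG⟩ := exists_dvd_sub_rename_add_X_mul_rename c F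
  have hPQ : aeval ![x, z] P + y * aeval ![x, z] Q = 0 := by
    have h := congrArg (aeval ![x, y, z]) hG
    simp only [map_sub, map_add, map_mul, RingHom.mem_ker.1 hF, hrel, aeval_emb, aeval_X] at h
    rw [show ![x, y, z] 1 = y from rfl] at h
    linear_combination -h
  have hPQ' : aeval ![x, z] P - y * aeval ![x, z] Q = 0 := by
    simpa [ν_aeval, hy, ← sub_eq_add_neg] using congrArg ν hPQ
  have hP : P = 0 := hxz.eq_zero_of_aeval_eq_zero P <|
    (mul_eq_zero.1 (by linear_combination hPQ + hPQ' : 2 * aeval ![x, z] P = 0)).resolve_left h2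
  have hQ : Q = 0 := hxz.eq_zero_of_aeval_eq_zero Q <|
    (mul_eq_zero.1 (by simpa [hP] using hPQ)).resolve_left hy0
  exact Ideal.mem_span_singleton.2 ⟨G, by simpa [hP, hQ] using hG⟩

end Relations

section Ternary

variable (R : Type*) [CommRing R]

/-- The invariant `γ₂ = 3σ₂ - σ₁²`. -/
noncomputable def gammaTwo : MvPolynomial (Fin 3) R :=
  3 * esymm (Fin 3) R 2 - esymm (Fin 3) R 1 ^ 2

/-- The invariant `γ₃ = 27σ₃ - 9σ₁σ₂ + 2σ₁³`. -/
noncomputable def gammaThree : MvPolynomial (Fin 3) R :=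
  27 * esymm (Fin 3) R 3 - 9 * esymm (Fin 3) R 1 * esymm (Fin 3) R 2 + 2 * esymm (Fin 3) R 1 ^ 3

lemma esymm_fin_three_one : esymm (Fin 3) R 1 = X 0 + X 1 + X 2 := by
  rw [esymm_one, Fin.sum_univ_three]

lemma esymm_fin_three_two : esymm (Fin 3) R 2 = X 0 * X 1 + X 0 * X 2 + X 1 * X 2 := by
  have h : Finset.powersetCard 2 (Finset.univ : Finset (Fin 3)) = {{0, 1}, {0, 2}, {1, 2}} := by
    decide
  rw [esymm, h, Finset.sum_insert (by decide), Finset.sum_pair (by decide)]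
  simp [add_assoc]

lemma esymm_fin_three_three : esymm (Fin 3) R 3 = X 0 * X 1 * X 2 := by
  have h : Finset.powersetCard 3 (Finset.univ : Finset (Fin 3)) = {Finset.univ} := by
    decide
  rw [esymm, h, Finset.sum_singleton, Fin.prod_univ_three]

lemma gammaTwo_isSymmetric : (gammaTwo R).IsSymmetric := fun e ↦ by
  simp only [gammaTwo, map_sub, map_mul, map_pow, map_ofNat, rename_esymm]

lemma gammaThree_isSymmetric : (gammaThree R).IsSymmetric := fun e ↦ by
  simp only [gammaThree, map_add, map_sub, map_mul, map_pow, map_ofNat, rename_esymm]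

lemma gammaTwo_eq : gammaTwo R =
    -((X 0 - X 1) ^ 2 + (X 0 - X 1) * (X 1 - X 2) + (X 1 - X 2) ^ 2) := by
  rw [gammaTwo, esymm_fin_three_one, esymm_fin_three_two]
  ring

lemma gammaThree_eq : gammaThree R =
    ((X 0 - X 1) + (X 0 - X 2)) * ((X 1 - X 0) + (X 1 - X 2)) * ((X 2 - X 0) + (X 2 - X 1)) := by
  rw [gammaThree, esymm_fin_three_one, esymm_fin_three_two, esymm_fin_three_three]
  ring

lemma differenceProduct_fin_three : differenceProduct (Fin 3) R =
    -((X 0 - X 1) ^ 2 * (X 0 - X 2) ^ 2 * (X 1 - X 2) ^ 2) := by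
  have h : ({ij : Fin 3 × Fin 3 | ij.1 ≠ ij.2} : Finset _) =
      {(0, 1), (0, 2), (1, 0), (1, 2), (2, 0), (2, 1)} := by decide
  rw [differenceProduct, h]
  simp only [Finset.mem_insert, Finset.mem_singleton, Prod.mk.injEq, Fin.reduceEq, zero_ne_one,
    one_ne_zero, and_false, and_true, and_self, or_self, not_false_eq_true, Finset.prod_insert,
    Finset.prod_singleton]
  ring

lemma gammaThree_sq :
    gammaThree R ^ 2 = 27 * differenceProduct (Fin 3) R - 4 * gammaTwo R ^ 3 := by
  rw [differenceProduct_fin_three, gammaTwo_eq, gammaThree_eq]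
  ring

lemma gammaTwo_mem_differenceSubalgebra : gammaTwo R ∈ differenceSubalgebra (Fin 3) R := by
  rw [mem_differenceSubalgebra_iff 2, gammaTwo_eq]
  simp

lemma gammaThree_mem_differenceSubalgebra : gammaThree R ∈ differenceSubalgebra (Fin 3) R := by
  rw [mem_differenceSubalgebra_iff 2, gammaThree_eq]
  simp

lemma gammaTwo_isHomogeneous : (gammaTwo R).IsHomogeneous 2 := by
  have h (i j : Fin 3) : (X i - X j : MvPolynomial (Fin 3) R).IsHomogeneous 1 :=
    (isHomogeneous_X R i).sub (isHomogeneous_X R j)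
  rw [gammaTwo_eq]
  exact ((((h 0 1).pow 2).add ((h 0 1).mul (h 1 2))).add ((h 1 2).pow 2)).neg

lemma gammaThree_isHomogeneous : (gammaThree R).IsHomogeneous 3 := by
  have h (i j : Fin 3) : (X i - X j : MvPolynomial (Fin 3) R).IsHomogeneous 1 :=
    (isHomogeneous_X R i).sub (isHomogeneous_X R j)
  rw [gammaThree_eq]
  exact (((h 0 1).add (h 0 2)).mul ((h 1 0).add (h 1 2))).mul ((h 2 0).add (h 2 1))

lemma axisRestrict_gammaTwo : axisRestrict 0 (gammaTwo R) = -Polynomial.X ^ 2 := by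
  simp [gammaTwo_eq]

lemma axisRestrict_gammaThree : axisRestrict 0 (gammaThree R) = 2 * Polynomial.X ^ 3 := by
  rw [gammaThree_eq]
  simp only [map_mul, map_add, map_sub, axisRestrict_X_self,
    axisRestrict_X_of_ne (R := R) (by decide : (1 : Fin 3) ≠ 0),
    axisRestrict_X_of_ne (R := R) (by decide : (2 : Fin 3) ≠ 0)]
  ring

lemma axisRestrict_differenceProduct : axisRestrict 0 (differenceProduct (Fin 3) R) = 0 := by
  simp [differenceProduct_fin_three]

/-- The subalgebra of `R[x₁, x₂, x₃]` generated by `γ₂`, `γ₃` and the difference product `δ`. -/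
noncomputable def gammaSubalgebra : Subalgebra R (MvPolynomial (Fin 3) R) :=
  Algebra.adjoin R {gammaTwo R, gammaThree R, differenceProduct (Fin 3) R}

variable {R}

lemma X_one_sub_X_two_dvd_of_axisRestrict_eq_zero {f : MvPolynomial (Fin 3) R}
    (hf : f ∈ differenceSubalgebra (Fin 3) R) (h0 : axisRestrict 0 f = 0) : X 1 - X 2 ∣ f := by
  have hcomp : (aeval (Function.update X 1 (X 2) : Fin 3 → MvPolynomial (Fin 3) R)).comp
      (aeval fun i : Fin 3 ↦ (X i - X 2 : MvPolynomial (Fin 3) R)) =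
      (Polynomial.aeval (X 0 - X 2 : MvPolynomial (Fin 3) R)).comp (axisRestrict 0) := by
    ext1 i
    fin_cases i <;> simp
  rw [X_sub_X_dvd_iff, ← (mem_differenceSubalgebra_iff 2).1 hf, ← AlgHom.comp_apply, hcomp]
  simp [h0]

lemma differenceProduct_dvd_of_X_one_sub_X_two_dvd [IsDomain R] (h2 : (2 : R) ≠ 0)
    {f : MvPolynomial (Fin 3) R} (hf : f.IsSymmetric) (h12 : X 1 - X 2 ∣ f) :
    differenceProduct (Fin 3) R ∣ f := by
  have h02 : X 0 - X 2 ∣ f := by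
    simpa [Equiv.swap_apply_of_ne_of_ne] using
      X_apply_sub_X_apply_dvd_of_isSymmetric hf (Equiv.swap 0 1) h12
  have h01 : X 0 - X 1 ∣ f := by
    simpa [Equiv.swap_apply_of_ne_of_ne] using
      X_apply_sub_X_apply_dvd_of_isSymmetric hf (Equiv.swap 1 2) h02
  have hsq {i j : Fin 3} (hij : i ≠ j) (h : X i - X j ∣ f) : (X i - X j) ^ 2 ∣ f :=
    sq_X_sub_X_dvd_of_isSymmetric h2 hij hf h
  have hp02 : Prime (X 0 - X 2 : MvPolynomial (Fin 3) R) := prime_X_sub_X (by decide)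
  have hp12 : Prime (X 1 - X 2 : MvPolynomial (Fin 3) R) := prime_X_sub_X (by decide)
  rw [differenceProduct_fin_three, neg_dvd]
  refine mul_pow_dvd_of_prime hp12 ?_ (mul_pow_dvd_of_prime hp02 ?_ (hsq (by decide) h01)
    (hsq (by decide) h02)) (hsq (by decide) h12)
  · simp [hp12.dvd_mul, hp12.dvd_pow_iff_dvd, X_sub_X_dvd_iff, sub_eq_zero,
      (X_injective (R := R)).eq_iff]
  · simp [hp02.dvd_pow_iff_dvd, X_sub_X_dvd_iff, sub_eq_zero, (X_injective (R := R)).eq_iff]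

lemma coeff_one_axisRestrict_eq_zero [IsDomain R] (h3 : (3 : R) ≠ 0) {f : MvPolynomial (Fin 3) R}
    (hf : f ∈ differenceSubalgebra (Fin 3) R) (hsymm : f.IsSymmetric) :
    (axisRestrict 0 f).coeff 1 = 0 :=
  (mul_eq_zero.1 (card_mul_coeff_one_axisRestrict hf hsymm 0)).resolve_left (by simpa using h3)

lemma two_dvd_coeff_axisRestrict {f : MvPolynomial (Fin 3) R}
    (hf : f ∈ differenceSubalgebra (Fin 3) R) (hsymm : f.IsSymmetric) {n : ℕ} (hn : Odd n) :
    2 ∣ (axisRestrict 0 f).coeff n := by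
  obtain ⟨m, rfl⟩ := hn
  have hcoeff := congrArg (Polynomial.coeff · (2 * m))
    (derivative_axisRestrict_add_smul hf hsymm (show (0 : Fin 3) ≠ 1 by decide))
  simp only [Fintype.card_fin, Nat.reduceSub, Polynomial.coeff_add, Polynomial.coeff_derivative,
    Polynomial.coeff_smul, Polynomial.coeff_zero, Nat.cast_mul, Nat.cast_ofNat] at hcoeff
  rw [nsmul_eq_mul, Nat.cast_ofNat] at hcoeff
  exact ⟨-(axisRestrict 0 (pderiv 1 f)).coeff (2 * m) - m * (axisRestrict 0 f).coeff (2 * m + 1),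
    by linear_combination hcoeff⟩

lemma gammaSubalgebra_le :
    gammaSubalgebra R ≤ differenceSubalgebra (Fin 3) R ⊓ symmetricSubalgebra (Fin 3) R := by
  refine Algebra.adjoin_le ?_
  rintro _ (rfl | rfl | rfl)
  · exact ⟨gammaTwo_mem_differenceSubalgebra R, gammaTwo_isSymmetric R⟩
  · exact ⟨gammaThree_mem_differenceSubalgebra R, gammaThree_isSymmetric R⟩
  · exact ⟨differenceProduct_mem_differenceSubalgebra _ R, differenceProduct_isSymmetric _ R⟩

lemma gammaTwo_mem_gammaSubalgebra : gammaTwo R ∈ gammaSubalgebra R :=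
  Algebra.subset_adjoin (by simp)

lemma gammaThree_mem_gammaSubalgebra : gammaThree R ∈ gammaSubalgebra R :=
  Algebra.subset_adjoin (by simp)

lemma differenceProduct_mem_gammaSubalgebra :
    differenceProduct (Fin 3) R ∈ gammaSubalgebra R :=
  Algebra.subset_adjoin (by simp)

lemma exists_mem_gammaSubalgebra_axisRestrict_eq_monomial {n : ℕ} {c : R} (h1 : n = 1 → c = 0)
    (hodd : Odd n → 2 ∣ c) :
    ∃ g ∈ gammaSubalgebra R, g.totalDegree ≤ n ∧ axisRestrict 0 g = Polynomial.monomial n c := by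
  rcases n.even_or_odd' with ⟨m, rfl | rfl⟩
  · refine ⟨C c * (-gammaTwo R) ^ m, ?_, ?_, ?_⟩
    · exact mul_mem (Subalgebra.algebraMap_mem _ c)
        (pow_mem (neg_mem gammaTwo_mem_gammaSubalgebra) m)
    · exact (((gammaTwo_isHomogeneous R).neg.pow m).C_mul c).totalDegree_le
    · simp [axisRestrict_gammaTwo, ← pow_mul, Polynomial.C_mul_X_pow_eq_monomial]
  obtain ⟨d, rfl⟩ := hodd (odd_two_mul_add_one m)
  obtain _ | m := m
  · exact ⟨0, zero_mem _, by simp, by simp [h1 rfl]⟩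
  refine ⟨C d * ((-gammaTwo R) ^ m * gammaThree R), ?_, ?_, ?_⟩
  · exact mul_mem (Subalgebra.algebraMap_mem _ d)
      (mul_mem (pow_mem (neg_mem gammaTwo_mem_gammaSubalgebra) m) gammaThree_mem_gammaSubalgebra)
  · have hhom := ((gammaTwo_isHomogeneous R).neg.pow m).mul (gammaThree_isHomogeneous R)
    exact (hhom.C_mul d).totalDegree_le
  · rw [← Polynomial.C_mul_X_pow_eq_monomial, map_mul, map_mul, map_pow, map_neg,
      axisRestrict_gammaTwo, axisRestrict_gammaThree, ← algebraMap_eq, AlgHom.commutes,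
      Polynomial.algebraMap_eq, map_mul, map_ofNat]
    ring

lemma exists_mem_gammaSubalgebra_axisRestrict_eq {p : Polynomial R} (h1 : p.coeff 1 = 0)
    (hodd : ∀ n, Odd n → 2 ∣ p.coeff n) :
    ∃ g ∈ gammaSubalgebra R, g.totalDegree ≤ p.natDegree ∧ axisRestrict 0 g = p := by
  choose g hg hdeg hmon using fun n ↦ exists_mem_gammaSubalgebra_axisRestrict_eq_monomial
    (n := n) (c := p.coeff n) (fun hn ↦ hn ▸ h1) (hodd n)
  refine ⟨∑ n ∈ Finset.range (p.natDegree + 1), g n, sum_mem fun n _ ↦ hg n, ?_, ?_⟩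
  · exact totalDegree_finsetSum_le fun n hn ↦ (hdeg n).trans (Finset.mem_range_succ_iff.1 hn)
  · simp only [map_sum, hmon, ← p.as_sum_range]

lemma differenceSubalgebra_inf_symmetricSubalgebra_le [IsDomain R] (h2 : (2 : R) ≠ 0)
    (h3 : (3 : R) ≠ 0) :
    differenceSubalgebra (Fin 3) R ⊓ symmetricSubalgebra (Fin 3) R ≤ gammaSubalgebra R := by
  intro f hf
  induction hn : f.totalDegree using Nat.strong_induction_on generalizing f with
  | _ n ih =>
  subst hn
  obtain ⟨g, hg, hgdeg, hgf⟩ := exists_mem_gammaSubalgebra_axisRestrict_eq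
    (coeff_one_axisRestrict_eq_zero h3 hf.1 hf.2) fun n hn ↦ two_dvd_coeff_axisRestrict hf.1 hf.2 hn
  have hfg := sub_mem hf (gammaSubalgebra_le hg)
  obtain ⟨k, hk⟩ := differenceProduct_dvd_of_X_one_sub_X_two_dvd h2 hfg.2
    (X_one_sub_X_two_dvd_of_axisRestrict_eq_zero hfg.1 (by rw [map_sub, hgf, sub_self]))
  rw [hk] at hfg
  suffices k ∈ gammaSubalgebra R by
    rw [sub_eq_iff_eq_add.1 hk]
    exact add_mem (mul_mem differenceProduct_mem_gammaSubalgebra this) hg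
  rcases eq_or_ne k 0 with rfl | hk0
  · exact zero_mem _
  have hk_mem := mem_differenceSubalgebra_inf_symmetricSubalgebra_of_mul_mem
    (gammaSubalgebra_le differenceProduct_mem_gammaSubalgebra) (differenceProduct_ne_zero _ R) hfg
  refine ih _ ?_ hk_mem rfl
  have hδ : (differenceProduct (Fin 3) R).totalDegree = 6 :=
    (differenceProduct_isHomogeneous _ R).totalDegree (differenceProduct_ne_zero _ R)
  have hle : (f - g).totalDegree ≤ f.totalDegree :=
    (totalDegree_sub _ _).trans (max_le le_rfl (hgdeg.trans (natDegree_axisRestrict_le 0 f)))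
  rw [hk, totalDegree_mul_of_isDomain (differenceProduct_ne_zero _ R) hk0, hδ] at hle
  omega

theorem differenceSubalgebra_inf_symmetricSubalgebra_eq [IsDomain R] (h2 : (2 : R) ≠ 0)
    (h3 : (3 : R) ≠ 0) :
    differenceSubalgebra (Fin 3) R ⊓ symmetricSubalgebra (Fin 3) R = gammaSubalgebra R :=
  le_antisymm (differenceSubalgebra_inf_symmetricSubalgebra_le h2 h3) gammaSubalgebra_le

lemma algebraicIndependent_gammaTwo_differenceProduct [IsDomain R] :
    AlgebraicIndependent R ![gammaTwo R, differenceProduct (Fin 3) R] := by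
  refine algebraicIndependent_of_map_eq_zero (i := 1) (axisRestrict 0) ?_
    (by simpa using differenceProduct_ne_zero _ R) (by simpa using axisRestrict_differenceProduct R)
  have : Subsingleton {j : Fin 2 // j ≠ 1} := ⟨by decide⟩
  rw [algebraicIndependent_singleton_iff ⟨0, by decide⟩]
  change Transcendental R (axisRestrict 0 (gammaTwo R))
  rw [axisRestrict_gammaTwo]
  exact Polynomial.transcendental _ (by simp) (by simp)

theorem ker_aeval_gamma [IsDomain R] (h2 : (2 : R) ≠ 0) :
    RingHom.ker (aeval ![gammaTwo R, gammaThree R, differenceProduct (Fin 3) R] :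
      MvPolynomial (Fin 3) R →ₐ[R] MvPolynomial (Fin 3) R) =
        Ideal.span {27 * X 2 - 4 * X 0 ^ 3 - X 1 ^ 2} := by
  have hrel : aeval ![gammaTwo R, differenceProduct (Fin 3) R]
      (27 * X 1 - 4 * X 0 ^ 3 : MvPolynomial (Fin 2) R) = gammaThree R ^ 2 := by
    simp only [map_sub, map_mul, map_pow, map_ofNat, aeval_X]
    exact (gammaThree_sq R).symm
  have hne : gammaThree R ≠ 0 := fun h0 ↦ by
    have h := congrArg (Polynomial.coeff · 3) (axisRestrict_gammaThree R)
    simp [h0, Polynomial.coeff_ofNat_mul, h2.symm] at h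
  have hneg (i j : Fin 3) : aeval (fun k ↦ -X k) (X i - X j : MvPolynomial (Fin 3) R) =
      -(X i - X j : MvPolynomial (Fin 3) R) := by
    rw [map_sub, aeval_X, aeval_X]
    ring
  have h := ker_aeval_eq_span_of_sq_eq (algebraicIndependent_gammaTwo_differenceProduct (R := R))
    (27 * X 1 - 4 * X 0 ^ 3) hrel (aeval fun i ↦ -X i)
    (by simp only [gammaTwo_eq, map_neg, map_add, map_mul, map_pow, hneg]; ring)
    (by simp only [gammaThree_eq, map_add, map_mul, hneg]; ring)
    (by simp only [differenceProduct_fin_three, map_neg, map_mul, map_pow, hneg]; ring)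
    hne (mvPolynomial_two_ne_zero h2)
  rw [h]
  simp only [map_sub, map_mul, map_pow, map_ofNat, rename_X, Matrix.cons_val]

end Ternary

end DifferenceInvariants

open DifferenceInvariants in
theorem stmt_19_general {R : Type*} [CommRing R] [IsDomain R] (two_ne : (2 : R) ≠ 0)
    (three_ne : (3 : R) ≠ 0) (σ1 σ2 σ3 δ γ2 γ3 : MvPolynomial (Fin 3) R)
    (h1 : σ1 = X 0 + X 1 + X 2)
    (h2 : σ2 = X 0 * X 1 + X 0 * X 2 + X 1 * X 2)
    (h3 : σ3 = X 0 * X 1 * X 2)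
    (hδ : δ = ∏ ij ∈ (Finset.univ : Finset (Fin 3 × Fin 3)).filter fun ij => ij.1 ≠ ij.2,
        (X ij.1 - X ij.2))
    (hγ2 : γ2 = 3 * σ2 - σ1 ^ 2)
    (hγ3 : γ3 = 27 * σ3 - 9 * σ1 * σ2 + 2 * σ1 ^ 3)
    (A : Subalgebra R (MvPolynomial (Fin 3) R))
    (hA : A = Algebra.adjoin R {d : MvPolynomial (Fin 3) R | ∃ i j : Fin 3, d = X i - X j}) :
    {f : MvPolynomial (Fin 3) R | f ∈ A ∧ ∀ g : Equiv.Perm (Fin 3), rename (⇑g) f = f} =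
        ↑(Algebra.adjoin R {γ2, γ3, δ}) ∧
    RingHom.ker (aeval ![γ2, γ3, δ] :
        MvPolynomial (Fin 3) R →ₐ[R] MvPolynomial (Fin 3) R) =
      Ideal.span {27 * X 2 - 4 * X 0 ^ 3 - X 1 ^ 2} := by
  obtain rfl : γ2 = gammaTwo R := by
    rw [hγ2, h1, h2, gammaTwo, esymm_fin_three_one, esymm_fin_three_two]
  obtain rfl : γ3 = gammaThree R := by
    rw [hγ3, h1, h2, h3, gammaThree, esymm_fin_three_one, esymm_fin_three_two,
      esymm_fin_three_three]
  subst hδ hA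
  exact ⟨congrArg SetLike.coe (differenceSubalgebra_inf_symmetricSubalgebra_eq two_ne three_ne),
    ker_aeval_gamma two_ne⟩

/-- Let `A ⊆ ℤ[x₁, x₂, x₃]` be the `ℤ`-subalgebra generated by the differences
`x_i - x_j`, and set `γ₂ = 3σ₂ - σ₁²`, `γ₃ = 27σ₃ - 9σ₁σ₂ + 2σ₁³`,
`δ = ∏_{i ≠ j}(x_i - x_j)`.  Then (a) the `S₃`-invariant elements of `A` form exactly
the `ℤ`-subalgebra generated by `γ₂, γ₃, δ`; and (b) the kernel of the `ℤ`-algebra map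
`ℤ[X, Y, Z] → ℤ[x₁, x₂, x₃]`, `X ↦ γ₂`, `Y ↦ γ₃`, `Z ↦ δ`, is the principal ideal
generated by `27Z - 4X³ - Y²`. -/
theorem stmt_19 (σ1 σ2 σ3 δ γ2 γ3 : MvPolynomial (Fin 3) ℤ)
    (h1 : σ1 = X 0 + X 1 + X 2)
    (h2 : σ2 = X 0 * X 1 + X 0 * X 2 + X 1 * X 2)
    (h3 : σ3 = X 0 * X 1 * X 2)
    (hδ : δ = ∏ ij ∈ (Finset.univ : Finset (Fin 3 × Fin 3)).filter fun ij => ij.1 ≠ ij.2,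
        (X ij.1 - X ij.2))
    (hγ2 : γ2 = 3 * σ2 - σ1 ^ 2)
    (hγ3 : γ3 = 27 * σ3 - 9 * σ1 * σ2 + 2 * σ1 ^ 3)
    (A : Subalgebra ℤ (MvPolynomial (Fin 3) ℤ))
    (hA : A = Algebra.adjoin ℤ {d : MvPolynomial (Fin 3) ℤ | ∃ i j : Fin 3, d = X i - X j}) :
    {f : MvPolynomial (Fin 3) ℤ | f ∈ A ∧ ∀ g : Equiv.Perm (Fin 3), rename (⇑g) f = f} =
        ↑(Algebra.adjoin ℤ {γ2, γ3, δ}) ∧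
    RingHom.ker (aeval ![γ2, γ3, δ] :
        MvPolynomial (Fin 3) ℤ →ₐ[ℤ] MvPolynomial (Fin 3) ℤ) =
      Ideal.span {27 * X 2 - 4 * X 0 ^ 3 - X 1 ^ 2} :=
  stmt_19_general two_ne_zero three_ne_zero σ1 σ2 σ3 δ γ2 γ3 h1 h2 h3 hδ hγ2 hγ3 A hA
end
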